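/- (Theorem 2.2: positivity for the minimal Dirichlet problem.) Let d ≥ 1, 0 < m < 1 and 0 < 2R < R₀. There exist positive constants a and b depending only on d such that the following holds. Let u solve the minimal Dirichlet problem for the FDE ∂ₜu = Δ(u^m) on B_{R₀}(x₀) with nonnegative initial data u₀ supported in the closure of B_R(x₀), u₀ not identically zero, and extinction time T. Set A₀ = B_{R₀}(x₀) \ B_{2R}(x₀) and t_* = a (R₀ − 2R)² ( (∫_{B_R(x₀)} u₀ dx) / |A₀| )^{1−m}. Then T ≥ 2 t_*, and for every t ∈ (0, t_*]: u(t,x₀)^m ≥ b (R₀ − 2R)² |A₀|^{−1} T^{−1/(1−m)} t^{m/(1−m)} ∫_{B_R(x₀)} u₀(x) dx. -/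

import Mathlib

open MeasureTheory Metric Set Real

/-- The spatial Laplacian of `f : ℝ^d → ℝ` at a point, as the sum of second
coordinate derivatives. -/
noncomputable def spaceLap {d : ℕ} (f : EuclideanSpace ℝ (Fin d) → ℝ)
    (x : EuclideanSpace ℝ (Fin d)) : ℝ :=
  ∑ i : Fin d, fderiv ℝ (fun y => fderiv ℝ f y (EuclideanSpace.single i 1)) x
    (EuclideanSpace.single i 1)

/-- `u` is a classical solution of the fast diffusion equation `∂ₜ u = Δ(u^m)`
on the space-time set `Q`: it is positive and smooth on `Q` and satisfies the
equation pointwise on `Q`. -/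
def IsFDESol {d : ℕ} (m : ℝ) (Q : Set (ℝ × EuclideanSpace ℝ (Fin d)))
    (u : ℝ → EuclideanSpace ℝ (Fin d) → ℝ) : Prop :=
  (∀ p ∈ Q, 0 < u p.1 p.2) ∧
  ContDiffOn ℝ (⊤ : ℕ∞) (fun p : ℝ × EuclideanSpace ℝ (Fin d) => u p.1 p.2) Q ∧
  ∀ p ∈ Q, deriv (fun s => u s p.2) p.1 = spaceLap (fun y => u p.1 y ^ m) p.2

/-- `u` solves the homogeneous Dirichlet problem for the FDE `∂ₜ u = Δ(u^m)` on the
ball `B_ρ(x₀)` with initial data `u₀` and extinction time `T`. -/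
def IsDirichletSol {d : ℕ} (m : ℝ) (x₀ : EuclideanSpace ℝ (Fin d)) (ρ T : ℝ)
    (u : ℝ → EuclideanSpace ℝ (Fin d) → ℝ) (u₀ : EuclideanSpace ℝ (Fin d) → ℝ) : Prop :=
  (∀ t ∈ Icc 0 T, ∀ x ∈ closedBall x₀ ρ, 0 ≤ u t x) ∧
  ContinuousOn (fun p : ℝ × EuclideanSpace ℝ (Fin d) => u p.1 p.2)
    (Icc 0 T ×ˢ closedBall x₀ ρ) ∧
  IsFDESol m (Ioo 0 T ×ˢ ball x₀ ρ) u ∧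
  (∀ x ∈ ball x₀ ρ, u 0 x = u₀ x) ∧
  (∀ t ∈ Ioc 0 T, ∀ x ∈ sphere x₀ ρ, u t x = 0) ∧
  (∀ x ∈ closedBall x₀ ρ, u T x = 0) ∧
  ∀ t ∈ Ioo 0 T, ∃ x ∈ ball x₀ ρ, u t x ≠ 0

/-!
Let `φ` be a cutoff equal to `1` on `B_{2R}` whose Laplacian is supported on the annulus `A₀` and
bounded there by `L ∼ (R₀ - 2R)⁻²`. Then `∫ u(t) φ` decreases at rate at most `L ∫_{A₀} u(t)^m`,
and this rate is bounded in two ways.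

Since the total mass does not increase, Jensen's inequality gives `∫_{A₀} u^m ≤ |A₀| (M / |A₀|)^m`
with `M = ∫ u₀`. Integrating up to the extinction time bounds `T` from below, and integrating up to
`t ≤ t_*` shows that `∫ u(t) φ ≥ M / 2`.

After time `t`, Aleksandrov reflection (`u(t, ·) ≤ u(t, x₀)` on `A₀`) and the Bénilan-Crandall bound
(`τ ↦ τ^{-1/(1-m)} u(τ, x)` is nonincreasing) give
`∫_{A₀} u(τ)^m ≤ |A₀| (T / t)^{m/(1-m)} u(t, x₀)^m`. The remaining mass `M / 2` has to be lost
before extinction, so `M / 2 ≤ T L |A₀| (T / t)^{m/(1-m)} u(t, x₀)^m`, which is the claim.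

Mass decay, reflection and the time bound are comparison principles, all consequences of the
`L¹`-contraction estimate for `∫ (u - v)₊ χ`, in which Kato's inequality controls the flux.
-/

section Development

open Filter Topology InnerProductSpace Laplacian

variable {d : ℕ}

local notation "𝔼" d:max => EuclideanSpace ℝ (Fin d)

section SpaceLap

variable {f g : 𝔼 d → ℝ} {x : 𝔼 d}

theorem eventually_differentiableAt_of_contDiffAt_two (hf : ContDiffAt ℝ 2 f x) :
    ∀ᶠ y in 𝓝 x, DifferentiableAt ℝ f y :=
  (hf.eventually (by simp)).mono fun _ hy => hy.differentiableAt (by simp)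

theorem differentiableAt_fderiv_apply (hf : ContDiffAt ℝ 2 f x) (v : 𝔼 d) :
    DifferentiableAt ℝ (fun y => fderiv ℝ f y v) x :=
  ((hf.fderiv_right (m := 1) (by norm_num)).differentiableAt (by simp)).clm_apply
    (differentiableAt_const v)

theorem contDiff_fderiv_apply (hf : ContDiff ℝ 2 f) (v : 𝔼 d) :
    ContDiff ℝ 1 fun y => fderiv ℝ f y v :=
  (hf.fderiv_right (m := 1) (by norm_num)).clm_apply contDiff_const

theorem continuous_fderiv_apply (hf : ContDiff ℝ 1 f) (v : 𝔼 d) :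
    Continuous fun y => fderiv ℝ f y v :=
  (hf.continuous_fderiv (by simp)).clm_apply continuous_const

theorem hasCompactSupport_fderiv_apply (hf : HasCompactSupport f) (v : 𝔼 d) :
    HasCompactSupport fun y => fderiv ℝ f y v :=
  (hf.fderiv (𝕜 := ℝ)).comp_left (g := fun L : 𝔼 d →L[ℝ] ℝ => L v) rfl

theorem spaceLap_eq_laplacian (hf : ContDiffAt ℝ 2 f x) : spaceLap f x = Δ f x := by
  have hdiff : DifferentiableAt ℝ (fderiv ℝ f) x :=
    (hf.fderiv_right (m := 1) (by norm_num)).differentiableAt (by simp)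
  rw [laplacian_eq_iteratedFDeriv_orthonormalBasis f (EuclideanSpace.basisFun (Fin d) ℝ)]
  refine Finset.sum_congr rfl fun i _ => ?_
  rw [fderiv_clm_apply hdiff (differentiableAt_const _)]
  simp [iteratedFDeriv_two_apply]

theorem spaceLap_congr (h : f =ᶠ[𝓝 x] g) : spaceLap f x = spaceLap g x := by
  refine Finset.sum_congr rfl fun i _ => ?_
  have hpartial : (fun y => fderiv ℝ f y (EuclideanSpace.single i 1)) =ᶠ[𝓝 x]
      fun y => fderiv ℝ g y (EuclideanSpace.single i 1) := by
    filter_upwards [h.fderiv (𝕜 := ℝ)] with y hy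
    rw [hy]
  rw [hpartial.fderiv_eq]

theorem spaceLap_const (c : ℝ) : spaceLap (fun _ : 𝔼 d => c) x = 0 := by
  simp [spaceLap]

theorem spaceLap_sub (hf : ContDiffAt ℝ 2 f x) (hg : ContDiffAt ℝ 2 g x) :
    spaceLap (fun y => f y - g y) x = spaceLap f x - spaceLap g x := by
  rw [spaceLap_eq_laplacian hf, spaceLap_eq_laplacian hg, spaceLap_eq_laplacian (hf.sub hg)]
  exact hf.laplacian_sub hg

theorem spaceLap_const_mul (hf : ContDiffAt ℝ 2 f x) (c : ℝ) :
    spaceLap (fun y => c * f y) x = c * spaceLap f x := by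
  rw [spaceLap_eq_laplacian hf, spaceLap_eq_laplacian (contDiffAt_const.mul hf)]
  exact laplacian_smul c hf

theorem sum_fderiv_mul_fderiv_eq_inner_gradient :
    ∑ i, fderiv ℝ f x (EuclideanSpace.single i 1) * fderiv ℝ g x (EuclideanSpace.single i 1) =
      ⟪gradient f x, gradient g x⟫_ℝ := by
  simpa only [EuclideanSpace.basisFun_apply, real_inner_comm (gradient g x),
    inner_gradient_left] using
    (EuclideanSpace.basisFun (Fin d) ℝ).sum_inner_mul_inner (gradient f x) (gradient g x)

theorem spaceLap_mul (hf : ContDiffAt ℝ 2 f x) (hg : ContDiffAt ℝ 2 g x) :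
    spaceLap (fun y => f y * g y) x =
      f x * spaceLap g x + g x * spaceLap f x + 2 * ⟪gradient f x, gradient g x⟫_ℝ := by
  rw [← sum_fderiv_mul_fderiv_eq_inner_gradient]
  simp only [spaceLap, Finset.mul_sum, ← Finset.sum_add_distrib]
  refine Finset.sum_congr rfl fun i _ => ?_
  set e : 𝔼 d := EuclideanSpace.single i 1
  have product_rule : (fun y => fderiv ℝ (fun y => f y * g y) y e) =ᶠ[𝓝 x]
      fun y => f y * fderiv ℝ g y e + g y * fderiv ℝ f y e := by
    filter_upwards [eventually_differentiableAt_of_contDiffAt_two hf,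
      eventually_differentiableAt_of_contDiffAt_two hg] with y hfy hgy
    rw [fderiv_fun_mul hfy hgy]
    rfl
  have hf₁ := hf.differentiableAt (by simp)
  have hg₁ := hg.differentiableAt (by simp)
  have hf₂ := differentiableAt_fderiv_apply hf e
  have hg₂ := differentiableAt_fderiv_apply hg e
  rw [product_rule.fderiv_eq, fderiv_fun_add (hf₁.fun_mul hg₂) (hg₁.fun_mul hf₂),
    fderiv_fun_mul hf₁ hg₂, fderiv_fun_mul hg₁ hf₂]
  simp only [add_apply, smul_apply, smul_eq_mul]
  ring

theorem spaceLap_comp {h : ℝ → ℝ} (hh : ContDiffAt ℝ 2 h (f x)) (hf : ContDiffAt ℝ 2 f x) :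
    spaceLap (fun y => h (f y)) x =
      deriv h (f x) * spaceLap f x + deriv (deriv h) (f x) * ‖gradient f x‖ ^ 2 := by
  rw [← real_inner_self_eq_norm_sq, ← sum_fderiv_mul_fderiv_eq_inner_gradient]
  simp only [spaceLap, Finset.mul_sum, ← Finset.sum_add_distrib]
  refine Finset.sum_congr rfl fun i _ => ?_
  set e : 𝔼 d := EuclideanSpace.single i 1
  have chain_rule : (fun y => fderiv ℝ (fun y => h (f y)) y e) =ᶠ[𝓝 x]
      fun y => deriv h (f y) * fderiv ℝ f y e := by
    have hh₁ : ∀ᶠ s in 𝓝 (f x), DifferentiableAt ℝ h s :=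
      (hh.eventually (by simp)).mono fun _ hs => hs.differentiableAt (by simp)
    filter_upwards [eventually_differentiableAt_of_contDiffAt_two hf,
      hf.continuousAt.eventually hh₁] with y hfy hhy
    exact congrArg (· e) (hhy.hasDerivAt.comp_hasFDerivAt y hfy.hasFDerivAt).fderiv
  have hf₁ := hf.differentiableAt (by simp)
  have hh₂ : DifferentiableAt ℝ (deriv h) (f x) :=
    (hh.derivWithin (m := 1) (by norm_num)).differentiableAt (by simp)
  have hcomp := (hh₂.hasDerivAt.comp_hasFDerivAt x hf₁.hasFDerivAt).fun_mul
    (differentiableAt_fderiv_apply hf e).hasFDerivAt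
  rw [chain_rule.fderiv_eq]
  refine (congrArg (· e) hcomp.fderiv).trans ?_
  simp only [add_apply, smul_apply, smul_eq_mul,
    Function.comp_apply]
  ring

theorem continuousAt_spaceLap (hf : ContDiffAt ℝ 2 f x) : ContinuousAt (spaceLap f) x := by
  refine tendsto_finsetSum _ fun i _ => ?_
  have hpartial : ContDiffAt ℝ 1 (fun y => fderiv ℝ f y (EuclideanSpace.single i 1)) x :=
    (hf.fderiv_right (m := 1) (by norm_num)).clm_apply contDiffAt_const
  exact (hpartial.fderiv_right (m := 0) (by norm_num)).continuousAt.clm_apply continuousAt_const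

theorem continuousOn_spaceLap {Ω : Set (𝔼 d)} (hΩ : IsOpen Ω) (hf : ContDiffOn ℝ 2 f Ω) :
    ContinuousOn (spaceLap f) Ω := fun _ hx =>
  (continuousAt_spaceLap (hf.contDiffAt (hΩ.mem_nhds hx))).continuousWithinAt

theorem continuous_spaceLap (hf : ContDiff ℝ 2 f) : Continuous (spaceLap f) :=
  continuous_iff_continuousAt.2 fun _ => continuousAt_spaceLap hf.contDiffAt

theorem spaceLap_eq_zero_of_notMem_tsupport (hx : x ∉ tsupport f) : spaceLap f x = 0 :=
  (spaceLap_congr (notMem_tsupport_iff_eventuallyEq.1 hx)).trans (spaceLap_const 0)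

theorem tsupport_spaceLap_subset : tsupport (spaceLap f) ⊆ tsupport f :=
  closure_minimal (fun _ hx => not_imp_comm.1 spaceLap_eq_zero_of_notMem_tsupport hx)
    (isClosed_tsupport f)

theorem hasCompactSupport_spaceLap (hf : HasCompactSupport f) : HasCompactSupport (spaceLap f) :=
  hf.of_isClosed_subset (isClosed_tsupport _) tsupport_spaceLap_subset

theorem spaceLap_comp_affineIsometryEquiv (σ : 𝔼 d ≃ᵃⁱ[ℝ] 𝔼 d) (hf : ContDiffAt ℝ 2 f (σ x)) :
    spaceLap (fun y => f (σ y)) x = spaceLap f (σ x) := by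
  have hσ : ∀ y, HasFDerivAt σ (σ.linearIsometryEquiv : 𝔼 d →L[ℝ] 𝔼 d) y := fun _ =>
    σ.toAffineIsometry.toContinuousAffineMap.hasFDerivAt
  rw [spaceLap_eq_laplacian hf, laplacian_eq_iteratedFDeriv_orthonormalBasis f
    ((EuclideanSpace.basisFun (Fin d) ℝ).map σ.linearIsometryEquiv)]
  refine Finset.sum_congr rfl fun i _ => ?_
  set e : 𝔼 d := EuclideanSpace.single i 1
  have chain_rule : (fun y => fderiv ℝ (fun y => f (σ y)) y e) =ᶠ[𝓝 x]
      fun y => fderiv ℝ f (σ y) (σ.linearIsometryEquiv e) := by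
    filter_upwards [σ.continuous.continuousAt.eventually
      (eventually_differentiableAt_of_contDiffAt_two hf)] with y hy
    exact congrArg (· e) (hy.hasFDerivAt.comp y (hσ y)).fderiv
  have hf₂ : DifferentiableAt ℝ (fderiv ℝ f) (σ x) :=
    (hf.fderiv_right (m := 1) (by norm_num)).differentiableAt (by simp)
  have hcomp := (hf₂.hasFDerivAt.comp x (hσ x)).clm_apply
    (hasFDerivAt_const (σ.linearIsometryEquiv e) x)
  rw [chain_rule.fderiv_eq]
  refine (congrArg (· e) hcomp.fderiv).trans ?_
  simp [iteratedFDeriv_two_apply, e]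

theorem integral_mul_fderiv_apply_eq_neg (hf : ContDiff ℝ 1 f) (hg : ContDiff ℝ 1 g)
    (hgc : HasCompactSupport g) (v : 𝔼 d) :
    ∫ x, f x * fderiv ℝ g x v = -∫ x, fderiv ℝ f x v * g x := by
  apply integral_mul_fderiv_eq_neg_fderiv_mul_of_integrable
  · exact ((continuous_fderiv_apply hf v).mul hg.continuous).integrable_of_hasCompactSupport
      hgc.mul_left
  · exact (hf.continuous.mul (continuous_fderiv_apply hg v)).integrable_of_hasCompactSupport
      (hasCompactSupport_fderiv_apply hgc v).mul_left
  · exact (hf.continuous.mul hg.continuous).integrable_of_hasCompactSupport hgc.mul_left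
  · exact fun x _ => hf.differentiable (by simp) x
  · exact fun x _ => hg.differentiable (by simp) x

theorem integral_spaceLap_mul (hf : ContDiff ℝ 2 f) (hg : ContDiff ℝ 2 g)
    (hgc : HasCompactSupport g) :
    ∫ x, spaceLap f x * g x = ∫ x, f x * spaceLap g x := by
  simp only [spaceLap, Finset.sum_mul, Finset.mul_sum]
  rw [integral_finsetSum, integral_finsetSum]
  · refine Finset.sum_congr rfl fun i _ => ?_
    rw [integral_mul_fderiv_apply_eq_neg (hf.of_le (by norm_num)) (contDiff_fderiv_apply hg _)
        (hasCompactSupport_fderiv_apply hgc _),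
      integral_mul_fderiv_apply_eq_neg (contDiff_fderiv_apply hf _) (hg.of_le (by norm_num)) hgc,
      neg_neg]
  · exact fun i _ => (hf.continuous.mul (continuous_fderiv_apply (contDiff_fderiv_apply hg _)
      _)).integrable_of_hasCompactSupport
        (hasCompactSupport_fderiv_apply (hasCompactSupport_fderiv_apply hgc _) _).mul_left
  · exact fun i _ => ((continuous_fderiv_apply (contDiff_fderiv_apply hf _) _).mul
      hg.continuous).integrable_of_hasCompactSupport hgc.mul_left

end SpaceLap

section LocalIntegrationByParts

variable {Ω : Set (𝔼 d)} {f χ : 𝔼 d → ℝ}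

theorem exists_contDiff_eventuallyEq_of_contDiffOn {F : Type*} [NormedAddCommGroup F]
    [NormedSpace ℝ F] [FiniteDimensional ℝ F] {n : ℕ∞} {U K : Set F} {f : F → ℝ} (hU : IsOpen U)
    (hK : IsClosed K) (hKU : K ⊆ U) (hf : ContDiffOn ℝ n f U) :
    ∃ g : F → ℝ, ContDiff ℝ n g ∧ ∀ x ∈ K, g =ᶠ[𝓝 x] f := by
  obtain ⟨η, hη_zero, hη_one, -⟩ := exists_contMDiffMap_zero_one_nhds_of_isClosed (n := n)
    (modelWithCornersSelf ℝ F) hU.isClosed_compl hK (disjoint_compl_left_iff_subset.2 hKU)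
  obtain ⟨V, hV, hUV, hηV⟩ := eventually_nhdsSet_iff_exists.1 hη_zero
  refine ⟨fun x => η x * f x, ?_, fun x hx => ?_⟩
  · refine contDiff_of_contDiffOn_union_of_isOpen (s := U) (t := V)
      (η.contMDiff.contDiff.contDiffOn.mul hf) ?_ ?_ hU hV
    · exact contDiffOn_const.congr fun x hx => by rw [hηV x hx, zero_mul]
    · exact eq_univ_of_forall fun x => (em (x ∈ U)).imp_right (hUV ·)
  · filter_upwards [eventually_nhdsSet_iff_forall.1 hη_one x hx] with y hy
    rw [hy, one_mul]

theorem integral_spaceLap_mul_of_contDiffOn (hΩ : IsOpen Ω) (hf : ContDiffOn ℝ 2 f Ω)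
    (hχ : ContDiff ℝ 2 χ) (hχc : HasCompactSupport χ) (hχΩ : tsupport χ ⊆ Ω) :
    ∫ x, spaceLap f x * χ x = ∫ x, f x * spaceLap χ x := by
  obtain ⟨F, hF, hFf⟩ := exists_contDiff_eventuallyEq_of_contDiffOn (n := 2) hΩ
    (isClosed_tsupport χ) hχΩ hf
  have lap_eq : ∀ x, spaceLap f x * χ x = spaceLap F x * χ x := fun x => by
    by_cases hx : x ∈ tsupport χ
    · rw [spaceLap_congr (hFf x hx)]
    · rw [image_eq_zero_of_notMem_tsupport hx, mul_zero, mul_zero]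
  have val_eq : ∀ x, f x * spaceLap χ x = F x * spaceLap χ x := fun x => by
    by_cases hx : x ∈ tsupport χ
    · rw [(hFf x hx).self_of_nhds]
    · rw [spaceLap_eq_zero_of_notMem_tsupport hx, mul_zero, mul_zero]
  simp only [lap_eq, val_eq]
  exact integral_spaceLap_mul hF hχ hχc

theorem integral_spaceLap_eq_zero (hχ : ContDiff ℝ 2 χ) (hχc : HasCompactSupport χ) :
    ∫ x, spaceLap χ x = 0 := by
  simpa [spaceLap_const] using (integral_spaceLap_mul (contDiff_const (c := (1 : ℝ))) hχ hχc).symm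

theorem continuous_mul_of_tsupport_subset {X : Type*} [TopologicalSpace X] {U : Set X}
    {f g : X → ℝ} (hU : IsOpen U) (hf : ContinuousOn f U) (hg : Continuous g)
    (hgU : tsupport g ⊆ U) : Continuous fun x => f x * g x :=
  continuous_of_tsupport fun _ hx =>
    (hf.continuousAt (hU.mem_nhds (hgU (tsupport_mul_subset_right hx)))).mul hg.continuousAt

theorem integrable_mul_of_tsupport_subset {X : Type*} [TopologicalSpace X] [MeasurableSpace X]
    [OpensMeasurableSpace X] {μ : Measure X} [IsFiniteMeasureOnCompacts μ] {U : Set X}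
    {f g : X → ℝ} (hU : IsOpen U) (hf : ContinuousOn f U) (hg : Continuous g)
    (hgc : HasCompactSupport g) (hgU : tsupport g ⊆ U) : Integrable (fun x => f x * g x) μ :=
  (continuous_mul_of_tsupport_subset hU hf hg hgU).integrable_of_hasCompactSupport hgc.mul_left

end LocalIntegrationByParts

section SmoothRamp

/-- A smooth convex approximation of `s ↦ max s 0`: it vanishes for `s ≤ δ`, has slope one for
`s ≥ 2 * δ`, and tends to `max s 0` as `δ → 0⁺`. -/
noncomputable def smoothRamp (δ s : ℝ) : ℝ :=
  ∫ a in (0 : ℝ)..s, smoothTransition (a / δ - 1)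

variable {δ s : ℝ}

theorem continuous_smoothTransition_div_sub_one (δ : ℝ) :
    Continuous fun a : ℝ => smoothTransition (a / δ - 1) :=
  smoothTransition.continuous.comp ((continuous_id.div_const δ).sub continuous_const)

theorem hasDerivAt_smoothRamp (δ s : ℝ) :
    HasDerivAt (smoothRamp δ) (smoothTransition (s / δ - 1)) s :=
  (continuous_smoothTransition_div_sub_one δ).integral_hasStrictDerivAt 0 s |>.hasDerivAt

theorem deriv_smoothRamp (δ : ℝ) :
    deriv (smoothRamp δ) = fun s => smoothTransition (s / δ - 1) :=
  funext fun s => (hasDerivAt_smoothRamp δ s).deriv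

theorem contDiff_smoothRamp (δ : ℝ) : ContDiff ℝ 2 (smoothRamp δ) := by
  refine (contDiff_succ_iff_deriv (n := 1)).2
    ⟨fun s => (hasDerivAt_smoothRamp δ s).differentiableAt, by simp, ?_⟩
  rw [deriv_smoothRamp]
  exact smoothTransition.contDiff.comp ((contDiff_id.div_const δ).sub contDiff_const)

theorem deriv_deriv_smoothRamp_nonneg (hδ : 0 ≤ δ) : 0 ≤ deriv (deriv (smoothRamp δ)) s := by
  rw [deriv_smoothRamp]
  exact Monotone.deriv_nonneg fun a b hab => smoothTransition.monotone (by gcongr)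

theorem deriv_deriv_smoothRamp_eq_zero (hδ : 0 < δ) (hs : 2 * δ < s) :
    deriv (deriv (smoothRamp δ)) s = 0 := by
  have hconst : deriv (smoothRamp δ) =ᶠ[𝓝 s] fun _ => 1 := by
    filter_upwards [Ioi_mem_nhds hs] with a ha
    rw [deriv_smoothRamp]
    refine smoothTransition.one_of_one_le ?_
    have := (lt_div_iff₀ hδ).2 ha
    linarith
  rw [hconst.deriv_eq, deriv_const]

theorem smoothRamp_eq_zero (hδ : 0 < δ) (hs : s ≤ δ) : smoothRamp δ s = 0 := by
  refine intervalIntegral.integral_zero_ae (ae_of_all _ fun a ha => ?_)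
  have ha' : a ≤ δ := (mem_uIoc.1 ha).elim (fun h => h.2.trans hs) fun h => h.2.trans hδ.le
  exact smoothTransition.zero_of_nonpos (by rwa [sub_nonpos, div_le_one hδ])

theorem smoothRamp_nonneg (hδ : 0 < δ) : 0 ≤ smoothRamp δ s := by
  rcases le_total s 0 with hs | hs
  · exact (smoothRamp_eq_zero hδ (hs.trans hδ.le)).ge
  · exact intervalIntegral.integral_nonneg hs fun _ _ => smoothTransition.nonneg _

theorem smoothRamp_le_max (hδ : 0 < δ) : smoothRamp δ s ≤ max s 0 := by
  rcases le_total s 0 with hs | hs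
  · exact (smoothRamp_eq_zero hδ (hs.trans hδ.le)).trans_le (le_max_right _ _)
  · calc smoothRamp δ s ≤ ∫ _ in (0 : ℝ)..s, (1 : ℝ) :=
          intervalIntegral.integral_mono_on hs
            ((continuous_smoothTransition_div_sub_one δ).intervalIntegrable _ _)
            intervalIntegrable_const fun _ _ => smoothTransition.le_one _
      _ = max s 0 := by simp [hs]

theorem max_sub_le_smoothRamp (hδ : 0 < δ) : max s 0 - 2 * δ ≤ smoothRamp δ s := by
  rcases le_total s (2 * δ) with hs | hs
  · exact (sub_nonpos.2 (max_le hs (by positivity))).trans (smoothRamp_nonneg hδ)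
  have hint := (continuous_smoothTransition_div_sub_one δ).intervalIntegrable (μ := volume)
  calc max s 0 - 2 * δ = 0 + ∫ _ in (2 * δ)..s, (1 : ℝ) := by
        simp [(show 0 ≤ 2 * δ by positivity).trans hs]
    _ ≤ smoothRamp δ (2 * δ) + ∫ a in (2 * δ)..s, smoothTransition (a / δ - 1) := by
        gcongr
        · exact smoothRamp_nonneg hδ
        · refine intervalIntegral.integral_mono_on hs intervalIntegrable_const (hint _ _)
            fun a ha => (smoothTransition.one_of_one_le ?_).ge
          have := (le_div_iff₀ hδ).2 ha.1
          linarith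
    _ = smoothRamp δ s := intervalIntegral.integral_add_adjacent_intervals (hint _ _) (hint _ _)

theorem tendsto_smoothRamp (s : ℝ) :
    Tendsto (fun δ => smoothRamp δ s) (𝓝[>] 0) (𝓝 (max s 0)) := by
  have hlower : Tendsto (fun δ => max s 0 - 2 * δ) (𝓝[>] (0 : ℝ)) (𝓝 (max s 0)) :=
    (Continuous.tendsto' (by fun_prop) 0 _ (by simp)).mono_left nhdsWithin_le_nhds
  refine tendsto_of_tendsto_of_tendsto_of_le_of_le' hlower tendsto_const_nhds ?_ ?_
  all_goals filter_upwards [self_mem_nhdsWithin] with δ hδ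
  exacts [max_sub_le_smoothRamp hδ, smoothRamp_le_max hδ]

theorem tendsto_deriv_smoothRamp (s : ℝ) :
    Tendsto (fun δ => deriv (smoothRamp δ) s) (𝓝[>] 0) (𝓝 (if 0 < s then 1 else 0)) := by
  simp only [deriv_smoothRamp]
  refine tendsto_nhds_of_eventually_eq ?_
  split_ifs with hs
  · filter_upwards [Ioo_mem_nhdsGT (half_pos hs)] with δ hδ
    refine smoothTransition.one_of_one_le ?_
    have : 2 ≤ s / δ := (le_div_iff₀ hδ.1).2 (by linarith [hδ.2])
    linarith
  · filter_upwards [self_mem_nhdsWithin] with δ hδ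
    have : s / δ ≤ 0 := div_nonpos_of_nonpos_of_nonneg (not_lt.1 hs) (mem_Ioi.1 hδ).le
    exact smoothTransition.zero_of_nonpos (by linarith)

end SmoothRamp

section Kato

/-- The nonnegative `C²` functions with compact support in `Ω`, used as test functions in the weak
formulation of the equation. -/
structure IsTestFunction (Ω : Set (𝔼 d)) (χ : 𝔼 d → ℝ) : Prop where
  contDiff : ContDiff ℝ 2 χ
  nonneg : ∀ x, 0 ≤ χ x
  hasCompactSupport : HasCompactSupport χ
  tsupport_subset : tsupport χ ⊆ Ω

variable {Ω : Set (𝔼 d)} {D χ : 𝔼 d → ℝ}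

theorem IsTestFunction.apply_eq_zero (hχ : IsTestFunction Ω χ) {x : 𝔼 d} (hx : x ∉ Ω) :
    χ x = 0 :=
  image_eq_zero_of_notMem_tsupport fun h => hx (hχ.tsupport_subset h)

theorem IsTestFunction.integrable_mul {μ : Measure (𝔼 d)} [IsFiniteMeasureOnCompacts μ]
    (hχ : IsTestFunction Ω χ) (hΩ : IsOpen Ω) (hD : ContinuousOn D Ω) :
    Integrable (fun x => D x * χ x) μ :=
  integrable_mul_of_tsupport_subset hΩ hD hχ.contDiff.continuous hχ.hasCompactSupport
    hχ.tsupport_subset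

theorem tendsto_integral_smoothRamp_mul (hΩ : IsOpen Ω) (hD : ContinuousOn D Ω)
    (hχ : Continuous χ) (hχc : HasCompactSupport χ) (hχΩ : tsupport χ ⊆ Ω) :
    Tendsto (fun δ => ∫ x, smoothRamp δ (D x) * χ x) (𝓝[>] 0) (𝓝 (∫ x, max (D x) 0 * χ x)) := by
  refine tendsto_integral_filter_of_dominated_convergence (fun x => |D x * χ x|)
    (Eventually.of_forall fun δ => ?_) ?_ (integrable_mul_of_tsupport_subset hΩ hD hχ hχc hχΩ).abs
    (ae_of_all _ fun x => (tendsto_smoothRamp (D x)).mul_const (χ x))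
  · exact (continuous_mul_of_tsupport_subset hΩ
      ((contDiff_smoothRamp δ).continuous.comp_continuousOn hD) hχ hχΩ).aestronglyMeasurable
  · filter_upwards [self_mem_nhdsWithin] with δ hδ
    refine ae_of_all _ fun x => ?_
    rw [norm_mul, abs_mul, norm_of_nonneg (smoothRamp_nonneg hδ), norm_eq_abs]
    gcongr
    exact (smoothRamp_le_max hδ).trans (max_le (le_abs_self _) (abs_nonneg _))

theorem tendsto_integral_deriv_smoothRamp_mul {F : 𝔼 d → ℝ} (hΩ : IsOpen Ω)
    (hD : ContinuousOn D Ω) (hF : ContinuousOn F Ω) (hχ : Continuous χ)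
    (hχc : HasCompactSupport χ) (hχΩ : tsupport χ ⊆ Ω) :
    Tendsto (fun δ => ∫ x, deriv (smoothRamp δ) (D x) * F x * χ x) (𝓝[>] 0)
      (𝓝 (∫ x in Ω ∩ {x | 0 < D x}, F x * χ x)) := by
  have hpos : IsOpen (Ω ∩ {x | 0 < D x}) := hD.isOpen_inter_preimage hΩ isOpen_Ioi
  rw [← integral_indicator hpos.measurableSet]
  refine tendsto_integral_filter_of_dominated_convergence (fun x => |F x * χ x|)
    (Eventually.of_forall fun δ => ?_) (Eventually.of_forall fun δ => ae_of_all _ fun x => ?_)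
    (integrable_mul_of_tsupport_subset hΩ hF hχ hχc hχΩ).abs (ae_of_all _ fun x => ?_)
  · have hderiv : Continuous (deriv (smoothRamp δ)) :=
      (contDiff_smoothRamp δ).continuous_deriv (by norm_num)
    exact (continuous_mul_of_tsupport_subset hΩ ((hderiv.comp_continuousOn hD).mul hF) hχ
      hχΩ).aestronglyMeasurable
  · rw [mul_assoc, norm_mul, norm_eq_abs (F x * χ x), deriv_smoothRamp,
      norm_of_nonneg (smoothTransition.nonneg _)]
    exact mul_le_of_le_one_left (abs_nonneg _) (smoothTransition.le_one _)
  · simp only [mul_assoc]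
    convert (tendsto_deriv_smoothRamp (D x)).mul_const (F x * χ x) using 2
    by_cases hx : x ∈ Ω
    · simp [indicator, hx]
    · simp [hx, image_eq_zero_of_notMem_tsupport fun h => hx (hχΩ h)]

theorem integral_deriv_smoothRamp_mul_spaceLap_le {δ : ℝ} (hδ : 0 < δ) (hΩ : IsOpen Ω)
    (hD : ContDiffOn ℝ 2 D Ω) (hχ : IsTestFunction Ω χ) :
    ∫ x, deriv (smoothRamp δ) (D x) * spaceLap D x * χ x ≤
      ∫ x, smoothRamp δ (D x) * spaceLap χ x := by
  have hramp : ContDiffOn ℝ 2 (fun x => smoothRamp δ (D x)) Ω :=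
    (contDiff_smoothRamp δ).comp_contDiffOn hD
  have hderiv : Continuous (deriv (smoothRamp δ)) :=
    (contDiff_smoothRamp δ).continuous_deriv (by norm_num)
  rw [← integral_spaceLap_mul_of_contDiffOn hΩ hramp hχ.contDiff hχ.hasCompactSupport
    hχ.tsupport_subset]
  refine integral_mono (hχ.integrable_mul hΩ ((hderiv.comp_continuousOn hD.continuousOn).mul
    (continuousOn_spaceLap hΩ hD))) (hχ.integrable_mul hΩ (continuousOn_spaceLap hΩ hramp))
    fun x => ?_
  by_cases hx : x ∈ Ω
  · refine mul_le_mul_of_nonneg_right ?_ (hχ.nonneg x)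
    rw [spaceLap_comp (contDiff_smoothRamp δ).contDiffAt (hD.contDiffAt (hΩ.mem_nhds hx))]
    exact le_add_of_nonneg_right
      (mul_nonneg (deriv_deriv_smoothRamp_nonneg hδ.le) (sq_nonneg _))
  · rw [hχ.apply_eq_zero hx, mul_zero, mul_zero]

theorem kato_inequality (hΩ : IsOpen Ω) (hD : ContDiffOn ℝ 2 D Ω) (hχ : IsTestFunction Ω χ) :
    ∫ x in Ω ∩ {x | 0 < D x}, spaceLap D x * χ x ≤ ∫ x, max (D x) 0 * spaceLap χ x := by
  refine le_of_tendsto_of_tendsto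
    (tendsto_integral_deriv_smoothRamp_mul hΩ hD.continuousOn (continuousOn_spaceLap hΩ hD)
      hχ.contDiff.continuous hχ.hasCompactSupport
      hχ.tsupport_subset)
    (tendsto_integral_smoothRamp_mul hΩ hD.continuousOn (continuous_spaceLap hχ.contDiff)
      (hasCompactSupport_spaceLap hχ.hasCompactSupport)
      (tsupport_spaceLap_subset.trans hχ.tsupport_subset)) ?_
  filter_upwards [self_mem_nhdsWithin] with δ hδ
  exact integral_deriv_smoothRamp_mul_spaceLap_le hδ hΩ hD hχ

end Kato

section Contraction

theorem le_add_mul_of_touching_minorants {N : ℝ → ℝ} {s t B : ℝ} (hst : s < t)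
    (hN : ContinuousOn N (Icc s t))
    (h : ∀ τ ∈ Ioo s t, ∃ (F : ℝ → ℝ) (F' : ℝ), (∀ᶠ σ in 𝓝[<] τ, F σ ≤ N σ) ∧ F τ = N τ ∧
      HasDerivAt F F' τ ∧ F' ≤ B) :
    N t ≤ N s + (t - s) * B := by
  have interior : ∀ ε > 0, ∀ b ∈ Ioo s t, N b - (B + ε) * b ≤ N s - (B + ε) * s := by
    intro ε hε b hb
    have hcont : ContinuousOn (fun τ => N τ - (B + ε) * τ) (Icc s b) :=
      (hN.mono (Icc_subset_Icc_right hb.2.le)).sub (by fun_prop)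
    obtain ⟨τ, hτ, hmax⟩ := isCompact_Icc.exists_isMaxOn (nonempty_Icc.2 hb.1.le) hcont
    rcases hτ.1.eq_or_lt with rfl | hsτ
    · exact hmax ⟨hb.1.le, le_rfl⟩
    obtain ⟨F, F', hFN, hFτ, hF, hF'⟩ := h τ ⟨hsτ, hτ.2.trans_lt hb.2⟩
    have slope_ge : ∀ᶠ σ in 𝓝[<] τ, B + ε ≤ slope F τ σ := by
      filter_upwards [hFN, Ioo_mem_nhdsLT hsτ] with σ hσ hσ_mem
      have hle : N σ - (B + ε) * σ ≤ N τ - (B + ε) * τ := hmax ⟨hσ_mem.1.le, hσ_mem.2.le.trans hτ.2⟩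
      rw [slope_comm, slope_def_field, le_div_iff₀ (sub_pos.2 hσ_mem.2)]
      linarith
    have hle : B + ε ≤ F' := ge_of_tendsto
      (hF.tendsto_slope.mono_left (nhdsLT_le_nhdsNE τ)) slope_ge
    linarith
  have hNb : Tendsto N (𝓝[<] t) (𝓝 (N t)) :=
    ((hN t ⟨hst.le, le_rfl⟩).mono_of_mem_nhdsWithin (Icc_mem_nhdsLT hst)).tendsto
  refine le_of_forall_pos_le_add fun ε hε => ?_
  have hε' : 0 < ε / (t - s) := div_pos hε (sub_pos.2 hst)
  have hlim : N t - (B + ε / (t - s)) * t ≤ N s - (B + ε / (t - s)) * s :=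
    le_of_tendsto (hNb.sub ((continuous_const.mul continuous_id).tendsto t |>.mono_left
      nhdsWithin_le_nhds)) (by
        filter_upwards [Ioo_mem_nhdsLT hst] with b hb using interior _ hε' b hb)
  have : ε / (t - s) * (t - s) = ε := div_mul_cancel₀ _ (sub_pos.2 hst).ne'
  linarith

section ParametricIntegral

variable {X : Type*} [TopologicalSpace X] [MeasurableSpace X] [OpensMeasurableSpace X]
  {μ : Measure X} [IsFiniteMeasureOnCompacts μ] {U : Set X} {χ : X → ℝ} {w : ℝ → X → ℝ}

theorem continuousOn_integral_mul_of_tsupport_subset {I : Set ℝ} (hU : IsOpen U)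
    (hw : ContinuousOn (fun p : ℝ × X => w p.1 p.2) (I ×ˢ U)) (hχ : Continuous χ)
    (hχc : HasCompactSupport χ) (hχU : tsupport χ ⊆ U) :
    ContinuousOn (fun τ => ∫ x, w τ x * χ x ∂μ) I := by
  refine continuousOn_integral_of_compact_support hχc.isCompact ?_ fun τ x _ hx => by
    rw [image_eq_zero_of_notMem_tsupport hx, mul_zero]
  rintro ⟨τ, x⟩ ⟨hτ, -⟩
  by_cases hx : x ∈ tsupport χ
  · exact ((hw _ ⟨hτ, hχU hx⟩).mono_of_mem_nhdsWithin (by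
      rw [nhdsWithin_prod_eq, nhdsWithin_univ]
      exact prod_mem_prod self_mem_nhdsWithin (hU.mem_nhds (hχU hx)))).mul
      (hχ.comp continuous_snd).continuousWithinAt
  · have hzero : (fun p : ℝ × X => w p.1 p.2 * χ p.2) =ᶠ[𝓝 (τ, x)] fun _ => 0 := by
      filter_upwards [continuous_snd.continuousAt.eventually
        (notMem_tsupport_iff_eventuallyEq.1 hx)] with p hp
      exact mul_eq_zero_of_right _ hp
    exact (continuousAt_const.congr hzero.symm).continuousWithinAt

theorem hasDerivAt_integral_mul_of_tsupport_subset {w' : ℝ → X → ℝ} {I : Set ℝ} {τ : ℝ}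
    (hI : IsOpen I) (hU : IsOpen U) (hτ : τ ∈ I) (hw : ∀ σ ∈ I, ContinuousOn (w σ) U)
    (hw' : ContinuousOn (fun p : ℝ × X => w' p.1 p.2) (I ×ˢ U))
    (hderiv : ∀ σ ∈ I, ∀ x ∈ U, HasDerivAt (w · x) (w' σ x) σ)
    (hχ : Continuous χ) (hχc : HasCompactSupport χ) (hχU : tsupport χ ⊆ U) :
    HasDerivAt (fun σ => ∫ x, w σ x * χ x ∂μ) (∫ x, w' τ x * χ x ∂μ) τ := by
  obtain ⟨r, hr, hrI⟩ := nhds_basis_closedBall.mem_iff.1 (hI.mem_nhds hτ)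
  obtain ⟨C, hC⟩ := ((isCompact_closedBall τ r).prod hχc.isCompact).exists_bound_of_continuousOn
    (hw'.mono (prod_mono hrI hχU))
  have hw'τ : ContinuousOn (w' τ) U :=
    hw'.comp (by fun_prop : Continuous fun x : X => (τ, x)).continuousOn fun x hx => ⟨hτ, hx⟩
  refine (hasDerivAt_integral_of_dominated_loc_of_deriv_le (bound := fun x => C * |χ x|)
    (F' := fun σ x => w' σ x * χ x) (ball_mem_nhds τ hr) ?_ ?_ ?_ ?_ ?_ ?_).2
  · filter_upwards [hI.mem_nhds hτ] with σ hσ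
    exact (integrable_mul_of_tsupport_subset hU (hw σ hσ) hχ hχc hχU).aestronglyMeasurable
  · exact integrable_mul_of_tsupport_subset hU (hw τ hτ) hχ hχc hχU
  · exact (integrable_mul_of_tsupport_subset hU hw'τ hχ hχc hχU).aestronglyMeasurable
  · refine ae_of_all _ fun x σ hσ => ?_
    by_cases hx : x ∈ tsupport χ
    · rw [norm_mul, norm_eq_abs (χ x)]
      gcongr
      exact hC (σ, x) ⟨ball_subset_closedBall hσ, hx⟩
    · simp [image_eq_zero_of_notMem_tsupport hx]
  · exact (hχ.integrable_of_hasCompactSupport hχc).abs.const_mul C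
  · refine ae_of_all _ fun x σ hσ => ?_
    by_cases hx : x ∈ tsupport χ
    · exact (hderiv σ (hrI (ball_subset_closedBall hσ)) x (hχU hx)).mul_const (χ x)
    · simpa [image_eq_zero_of_notMem_tsupport hx] using hasDerivAt_const σ (0 : ℝ)

end ParametricIntegral

namespace IsFDESol

variable {m : ℝ} {Q : Set (ℝ × 𝔼 d)} {u v : ℝ → 𝔼 d → ℝ}

theorem mono {Q' : Set (ℝ × 𝔼 d)} (hu : IsFDESol m Q u) (h : Q' ⊆ Q) : IsFDESol m Q' u :=
  ⟨fun p hp => hu.1 p (h hp), hu.2.1.mono h, fun p hp => hu.2.2 p (h hp)⟩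

theorem contDiffAt (hu : IsFDESol m Q u) (hQ : IsOpen Q) {p : ℝ × 𝔼 d} (hp : p ∈ Q) :
    ContDiffAt ℝ (⊤ : ℕ∞) (fun p : ℝ × 𝔼 d => u p.1 p.2) p :=
  hu.2.1.contDiffAt (hQ.mem_nhds hp)

theorem hasDerivAt_fderiv (hu : IsFDESol m Q u) (hQ : IsOpen Q) {p : ℝ × 𝔼 d} (hp : p ∈ Q) :
    HasDerivAt (fun s => u s p.2) (fderiv ℝ (fun p : ℝ × 𝔼 d => u p.1 p.2) p (1, 0)) p.1 :=
  ((hu.contDiffAt hQ hp).differentiableAt (by simp)).hasFDerivAt.comp_hasDerivAt (x := p.1)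
    (f := fun s => (s, p.2)) ((hasDerivAt_id p.1).prodMk (hasDerivAt_const p.1 p.2))

theorem hasDerivAt (hu : IsFDESol m Q u) (hQ : IsOpen Q) {p : ℝ × 𝔼 d} (hp : p ∈ Q) :
    HasDerivAt (fun s => u s p.2) (spaceLap (fun y => u p.1 y ^ m) p.2) p.1 :=
  hu.2.2 p hp ▸ (hu.hasDerivAt_fderiv hQ hp).differentiableAt.hasDerivAt

theorem continuousOn_spaceLap_rpow (hu : IsFDESol m Q u) (hQ : IsOpen Q) :
    ContinuousOn (fun p : ℝ × 𝔼 d => spaceLap (fun y => u p.1 y ^ m) p.2) Q :=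
  ((hu.2.1.continuousOn_fderiv_of_isOpen hQ (by simp)).clm_apply continuousOn_const).congr
    fun _ hp => (hu.hasDerivAt hQ hp).unique (hu.hasDerivAt_fderiv hQ hp)

theorem contDiffAt_rpow (hu : IsFDESol m Q u) (hQ : IsOpen Q) {t : ℝ} {x : 𝔼 d}
    (hp : (t, x) ∈ Q) : ContDiffAt ℝ 2 (fun y => u t y ^ m) x := by
  have hslice : ContDiffAt ℝ 2 (u t) x :=
    ((hu.contDiffAt hQ hp).of_le (by norm_cast)).comp x (contDiffAt_const.prodMk contDiffAt_id)
  exact hslice.rpow_const_of_ne (hu.1 _ hp).ne'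

section Product

variable {I : Set ℝ} {Ω : Set (𝔼 d)} {t : ℝ}

theorem contDiffOn_rpow (hu : IsFDESol m (I ×ˢ Ω) u) (hI : IsOpen I) (hΩ : IsOpen Ω)
    (ht : t ∈ I) : ContDiffOn ℝ 2 (fun y => u t y ^ m) Ω := fun _ hx =>
  (hu.contDiffAt_rpow (hI.prod hΩ) ⟨ht, hx⟩).contDiffWithinAt

theorem continuousOn_slice (hu : IsFDESol m (I ×ˢ Ω) u) (ht : t ∈ I) : ContinuousOn (u t) Ω :=
  hu.2.1.continuousOn.comp (by fun_prop : Continuous fun y : 𝔼 d => (t, y)).continuousOn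
    fun _ hy => ⟨ht, hy⟩

end Product

section TestedAgainst

variable {Ω : Set (𝔼 d)} {χ : 𝔼 d → ℝ} {s t B : ℝ}

theorem hasDerivAt_integral_mul {μ : Measure (𝔼 d)} [IsFiniteMeasureOnCompacts μ] {I : Set ℝ}
    (hu : IsFDESol m (I ×ˢ Ω) u) (hI : IsOpen I) (hΩ : IsOpen Ω) (ht : t ∈ I)
    (hχ : IsTestFunction Ω χ) :
    HasDerivAt (fun σ => ∫ x, u σ x * χ x ∂μ)
      (∫ x, spaceLap (fun y => u t y ^ m) x * χ x ∂μ) t :=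
  hasDerivAt_integral_mul_of_tsupport_subset hI hΩ ht (fun _ hσ => hu.continuousOn_slice hσ)
    (hu.continuousOn_spaceLap_rpow (hI.prod hΩ))
    (fun σ hσ x hx => hu.hasDerivAt (hI.prod hΩ) (p := (σ, x)) ⟨hσ, hx⟩)
    hχ.contDiff.continuous hχ.hasCompactSupport hχ.tsupport_subset

theorem integral_mul_le_of_flux_le (hst : s ≤ t) (hΩ : IsOpen Ω)
    (hu : IsFDESol m (Ioo s t ×ˢ Ω) u)
    (huc : ContinuousOn (fun p : ℝ × 𝔼 d => u p.1 p.2) (Icc s t ×ˢ Ω))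
    (hχ : IsTestFunction Ω χ)
    (hB : ∀ τ ∈ Ioo s t, -B ≤ ∫ x, u τ x ^ m * spaceLap χ x) :
    ∫ x, u s x * χ x ≤ (∫ x, u t x * χ x) + (t - s) * B := by
  have hderiv : ∀ τ ∈ Ioo s t, HasDerivAt (fun σ => ∫ x, u σ x * χ x)
      (∫ x, u τ x ^ m * spaceLap χ x) τ := fun τ hτ => by
    rw [← integral_spaceLap_mul_of_contDiffOn hΩ (hu.contDiffOn_rpow isOpen_Ioo hΩ hτ)
      hχ.contDiff hχ.hasCompactSupport hχ.tsupport_subset]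
    exact hu.hasDerivAt_integral_mul isOpen_Ioo hΩ hτ hχ
  rw [← interior_Icc] at hderiv hB
  have := (convex_Icc s t).mul_sub_le_image_sub_of_le_deriv
    (continuousOn_integral_mul_of_tsupport_subset hΩ huc hχ.contDiff.continuous
      hχ.hasCompactSupport hχ.tsupport_subset)
    (fun τ hτ => (hderiv τ hτ).differentiableAt.differentiableWithinAt)
    (fun τ hτ => (hB τ hτ).trans_eq (hderiv τ hτ).deriv.symm)
    s (left_mem_Icc.2 hst) t (right_mem_Icc.2 hst) hst
  linarith

theorem hasDerivAt_integral_sub_mul {μ : Measure (𝔼 d)} [IsFiniteMeasureOnCompacts μ] {I : Set ℝ}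
    (hu : IsFDESol m (I ×ˢ Ω) u) (hv : IsFDESol m (I ×ˢ Ω) v) (hI : IsOpen I) (hΩ : IsOpen Ω)
    (ht : t ∈ I) (hχ : IsTestFunction Ω χ) :
    HasDerivAt (fun σ => ∫ x, (u σ x - v σ x) * χ x ∂μ)
      (∫ x, spaceLap (fun y => u t y ^ m - v t y ^ m) x * χ x ∂μ) t := by
  have hlap : ∀ x, spaceLap (fun y => u t y ^ m - v t y ^ m) x * χ x =
      (spaceLap (fun y => u t y ^ m) x - spaceLap (fun y => v t y ^ m) x) * χ x := fun x => by
    by_cases hx : x ∈ Ω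
    · rw [spaceLap_sub (hu.contDiffAt_rpow (hI.prod hΩ) ⟨ht, hx⟩)
        (hv.contDiffAt_rpow (hI.prod hΩ) ⟨ht, hx⟩)]
    · rw [hχ.apply_eq_zero hx, mul_zero, mul_zero]
  simp only [hlap]
  exact hasDerivAt_integral_mul_of_tsupport_subset (w := fun σ x => u σ x - v σ x)
    (w' := fun σ x => spaceLap (fun y => u σ y ^ m) x - spaceLap (fun y => v σ y ^ m) x) hI hΩ ht
    (fun _ hσ => (hu.continuousOn_slice hσ).sub (hv.continuousOn_slice hσ))
    ((hu.continuousOn_spaceLap_rpow (hI.prod hΩ)).sub (hv.continuousOn_spaceLap_rpow (hI.prod hΩ)))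
    (fun σ hσ x hx => (hu.hasDerivAt (hI.prod hΩ) (p := (σ, x)) ⟨hσ, hx⟩).sub
      (hv.hasDerivAt (hI.prod hΩ) (p := (σ, x)) ⟨hσ, hx⟩))
    hχ.contDiff.continuous hχ.hasCompactSupport hχ.tsupport_subset

theorem setIntegral_sub_mul_eq_integral_posPart {I : Set ℝ} (hm : 0 < m)
    (hu : IsFDESol m (I ×ˢ Ω) u) (hv : IsFDESol m (I ×ˢ Ω) v) (ht : t ∈ I)
    (hP : MeasurableSet (Ω ∩ {x | 0 < u t x ^ m - v t x ^ m})) (hχ : IsTestFunction Ω χ) :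
    ∫ x in Ω ∩ {x | 0 < u t x ^ m - v t x ^ m}, (u t x - v t x) * χ x =
      ∫ x, max (u t x - v t x) 0 * χ x := by
  rw [← integral_indicator hP]
  refine integral_congr_ae (ae_of_all _ fun x => ?_)
  by_cases hx : x ∈ Ω
  · have hiff : 0 < u t x ^ m - v t x ^ m ↔ 0 < u t x - v t x := by
      rw [sub_pos, sub_pos, rpow_lt_rpow_iff (hv.1 (t, x) ⟨ht, hx⟩).le (hu.1 (t, x) ⟨ht, hx⟩).le hm]
    by_cases hpos : 0 < u t x - v t x
    · simp [indicator, hx, hiff, hpos, hpos.le, -sub_pos, -sub_nonneg]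
    · simp [indicator, hx, hiff, hpos, not_lt.1 hpos, -sub_pos]
  · simp [indicator, hx, hχ.apply_eq_zero hx]

-- The set `{u > v}` frozen at time `τ` gives a differentiable minorant of `∫ (u - v)₊ χ` touching
-- it at `τ`, to whose derivative Kato's inequality applies.
theorem integral_posPart_sub_mul_le (hm : 0 < m) (hst : s < t) (hΩ : IsOpen Ω)
    (hu : IsFDESol m (Ioo s t ×ˢ Ω) u) (hv : IsFDESol m (Ioo s t ×ˢ Ω) v)
    (huc : ContinuousOn (fun p : ℝ × 𝔼 d => u p.1 p.2) (Icc s t ×ˢ Ω))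
    (hvc : ContinuousOn (fun p : ℝ × 𝔼 d => v p.1 p.2) (Icc s t ×ˢ Ω))
    (hχ : IsTestFunction Ω χ)
    (hB : ∀ τ ∈ Ioo s t, ∫ x, max (u τ x ^ m - v τ x ^ m) 0 * spaceLap χ x ≤ B) :
    ∫ x, max (u t x - v t x) 0 * χ x ≤ (∫ x, max (u s x - v s x) 0 * χ x) + (t - s) * B := by
  refine le_add_mul_of_touching_minorants hst (continuousOn_integral_mul_of_tsupport_subset
    (w := fun σ x => max (u σ x - v σ x) 0) hΩ ((huc.sub hvc).sup continuousOn_const)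
    hχ.contDiff.continuous hχ.hasCompactSupport hχ.tsupport_subset) fun τ hτ => ?_
  have hD : ContDiffOn ℝ 2 (fun x => u τ x ^ m - v τ x ^ m) Ω :=
    (hu.contDiffOn_rpow isOpen_Ioo hΩ hτ).sub (hv.contDiffOn_rpow isOpen_Ioo hΩ hτ)
  have hP : MeasurableSet (Ω ∩ {x | 0 < u τ x ^ m - v τ x ^ m}) :=
    (hD.continuousOn.isOpen_inter_preimage hΩ isOpen_Ioi).measurableSet
  refine ⟨fun σ => ∫ x in Ω ∩ {x | 0 < u τ x ^ m - v τ x ^ m}, (u σ x - v σ x) * χ x, _, ?_,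
    setIntegral_sub_mul_eq_integral_posPart hm hu hv hτ hP hχ,
    hu.hasDerivAt_integral_sub_mul hv isOpen_Ioo hΩ hτ hχ,
    (kato_inequality hΩ hD hχ).trans (hB τ hτ)⟩
  filter_upwards [nhdsWithin_le_nhds (isOpen_Ioo.mem_nhds hτ)] with σ hσ
  have hsub : ContinuousOn (fun x => u σ x - v σ x) Ω :=
    (hu.continuousOn_slice hσ).sub (hv.continuousOn_slice hσ)
  have hsup := hχ.integrable_mul (μ := volume) hΩ (hsub.sup (continuousOn_const (c := (0 : ℝ))))
  calc _ ≤ ∫ x in Ω ∩ {x | 0 < u τ x ^ m - v τ x ^ m}, max (u σ x - v σ x) 0 * χ x :=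
        integral_mono (hχ.integrable_mul hΩ hsub) hsup.restrict fun x =>
          mul_le_mul_of_nonneg_right (le_max_left _ _) (hχ.nonneg x)
    _ ≤ ∫ x, max (u σ x - v σ x) 0 * χ x :=
        setIntegral_le_integral hsup (ae_of_all _ fun x =>
          mul_nonneg (le_max_right _ _) (hχ.nonneg x))

end TestedAgainst

end IsFDESol

end Contraction

section Comparison

theorem exists_pos_forall_le_imp_lt {X : Type*} [TopologicalSpace X] {K : Set X}
    (hK : IsCompact K) {f g : X → ℝ} (hf : ContinuousOn f K) (hg : ContinuousOn g K) {ε : ℝ}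
    (h : ∀ x ∈ K, g x ≤ 0 → f x < ε) : ∃ δ > 0, ∀ x ∈ K, g x ≤ δ → f x < ε := by
  obtain ⟨δ, hδ, hle⟩ := hK.exists_forall_le' ((continuousOn_const.sub hf).sup hg)
    (f := fun x => max (ε - f x) (g x)) (a := 0) fun x hx => by
      rcases le_or_gt (g x) 0 with hgx | hgx
      · exact lt_max_of_lt_left (sub_pos.2 (h x hx hgx))
      · exact lt_max_of_lt_right hgx
  refine ⟨δ / 2, half_pos hδ, fun x hx hgx => ?_⟩
  rcases le_max_iff.1 (hle x hx) with hfx | hgx' <;> linarith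

/-- A barrier on the open set `Ω` with compact hull `K`: a `C²` superharmonic function which is
positive on `Ω` and nonpositive on `K \ Ω`. It is the weight in the comparison principle. -/
structure IsBarrier (Ω K : Set (𝔼 d)) (ψ : 𝔼 d → ℝ) : Prop where
  isOpen : IsOpen Ω
  isCompact : IsCompact K
  subset : Ω ⊆ K
  contDiff : ContDiff ℝ 2 ψ
  pos : ∀ x ∈ Ω, 0 < ψ x
  nonpos : ∀ x ∈ K, x ∉ Ω → ψ x ≤ 0
  spaceLap_nonpos : ∀ x ∈ Ω, spaceLap ψ x ≤ 0

/-- The test function obtained from a barrier `ψ` by cutting it off smoothly below the level `δ`,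
extended by zero outside `Ω`. -/
noncomputable def barrierCutoff (Ω : Set (𝔼 d)) (ψ : 𝔼 d → ℝ) (δ : ℝ) : 𝔼 d → ℝ :=
  Ω.indicator fun x => smoothRamp δ (ψ x)

namespace IsBarrier

variable {Ω K : Set (𝔼 d)} {ψ w : 𝔼 d → ℝ} {δ ε C : ℝ} {x : 𝔼 d}

theorem barrierCutoff_eventuallyEq (hψ : IsBarrier Ω K ψ) (hx : x ∈ Ω) :
    barrierCutoff Ω ψ δ =ᶠ[𝓝 x] fun y => smoothRamp δ (ψ y) := by
  filter_upwards [hψ.isOpen.mem_nhds hx] with y hy using indicator_of_mem hy _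

theorem tsupport_barrierCutoff_subset (hψ : IsBarrier Ω K ψ) (hδ : 0 < δ) :
    tsupport (barrierCutoff Ω ψ δ) ⊆ K ∩ {y | δ ≤ ψ y} := by
  refine closure_minimal (fun y hy => ?_)
    (hψ.isCompact.isClosed.inter (isClosed_le continuous_const hψ.contDiff.continuous))
  have hyΩ : y ∈ Ω := mem_of_indicator_ne_zero hy
  refine ⟨hψ.subset hyΩ, show δ ≤ ψ y from not_lt.1 fun hlt => hy ?_⟩
  rw [barrierCutoff, indicator_of_mem hyΩ, smoothRamp_eq_zero hδ hlt.le]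

theorem isTestFunction_barrierCutoff (hψ : IsBarrier Ω K ψ) (hδ : 0 < δ) :
    IsTestFunction Ω (barrierCutoff Ω ψ δ) := by
  have hsupp : tsupport (barrierCutoff Ω ψ δ) ⊆ Ω := fun y hy => by
    obtain ⟨hyK, hyδ⟩ := hψ.tsupport_barrierCutoff_subset hδ hy
    by_contra hyΩ
    exact (hδ.trans_le hyδ).not_ge (hψ.nonpos y hyK hyΩ)
  refine ⟨contDiff_iff_contDiffAt.2 fun x => ?_,
    fun _ => indicator_nonneg (fun _ _ => smoothRamp_nonneg hδ) _,
    hψ.isCompact.of_isClosed_subset (isClosed_tsupport _)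
      ((hψ.tsupport_barrierCutoff_subset hδ).trans inter_subset_left), hsupp⟩
  by_cases hx : x ∈ Ω
  · exact ((contDiff_smoothRamp δ).comp hψ.contDiff).contDiffAt.congr_of_eventuallyEq
      (hψ.barrierCutoff_eventuallyEq hx)
  · exact (contDiffAt_const (c := (0 : ℝ))).congr_of_eventuallyEq
      (notMem_tsupport_iff_eventuallyEq.1 fun h => hx (hsupp h))

theorem mul_spaceLap_barrierCutoff_le (hψ : IsBarrier Ω K ψ) (hδ : 0 < δ) (hε : 0 ≤ ε)
    (hx : x ∈ Ω) (hC : |spaceLap ψ x| ≤ C) {p : ℝ} (hp : 0 ≤ p) (hpε : ψ x ≤ 2 * δ → p ≤ ε) :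
    p * spaceLap (barrierCutoff Ω ψ δ) x ≤ ε * spaceLap (barrierCutoff Ω ψ δ) x + ε * C := by
  rw [spaceLap_congr (hψ.barrierCutoff_eventuallyEq hx),
    spaceLap_comp (contDiff_smoothRamp δ).contDiffAt hψ.contDiff.contDiffAt]
  have hslope : deriv (smoothRamp δ) (ψ x) ∈ Icc 0 1 := by
    rw [deriv_smoothRamp]
    exact ⟨smoothTransition.nonneg _, smoothTransition.le_one _⟩
  have hlower : -C ≤ deriv (smoothRamp δ) (ψ x) * spaceLap ψ x := by
    nlinarith [neg_abs_le (spaceLap ψ x), hslope.1, hslope.2, abs_nonneg (spaceLap ψ x)]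
  have hupper : p * (deriv (smoothRamp δ) (ψ x) * spaceLap ψ x) ≤ 0 :=
    mul_nonpos_of_nonneg_of_nonpos hp
      (mul_nonpos_of_nonneg_of_nonpos hslope.1 (hψ.spaceLap_nonpos x hx))
  have hcurv : p * deriv (deriv (smoothRamp δ)) (ψ x) ≤ ε * deriv (deriv (smoothRamp δ)) (ψ x) := by
    rcases le_or_gt (ψ x) (2 * δ) with hle | hlt
    · exact mul_le_mul_of_nonneg_right (hpε hle) (deriv_deriv_smoothRamp_nonneg hδ.le)
    · rw [deriv_deriv_smoothRamp_eq_zero hδ hlt, mul_zero, mul_zero]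
  nlinarith [mul_le_mul_of_nonneg_right hcurv (sq_nonneg ‖gradient ψ x‖)]

theorem integral_mul_spaceLap_barrierCutoff_le (hψ : IsBarrier Ω K ψ) (hδ : 0 < δ) (hε : 0 ≤ ε)
    (hC : ∀ x ∈ Ω, |spaceLap ψ x| ≤ C) (hwc : ContinuousOn w Ω) (hw : ∀ x, 0 ≤ w x)
    (hwε : ∀ x ∈ Ω, ψ x ≤ 2 * δ → w x ≤ ε) :
    ∫ x, w x * spaceLap (barrierCutoff Ω ψ δ) x ≤ ε * (C * volume.real Ω) := by
  have hχ := hψ.isTestFunction_barrierCutoff hδ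
  have hΩfin : volume Ω ≠ ⊤ := ((measure_mono hψ.subset).trans_lt hψ.isCompact.measure_lt_top).ne
  have hLap : Integrable fun x => ε * spaceLap (barrierCutoff Ω ψ δ) x :=
    ((continuous_spaceLap hχ.contDiff).integrable_of_hasCompactSupport
      (hasCompactSupport_spaceLap hχ.hasCompactSupport)).const_mul ε
  have hconst : Integrable (Ω.indicator fun _ => ε * C) :=
    (integrableOn_const hΩfin).integrable_indicator hψ.isOpen.measurableSet
  calc ∫ x, w x * spaceLap (barrierCutoff Ω ψ δ) x
      ≤ ∫ x, ε * spaceLap (barrierCutoff Ω ψ δ) x + Ω.indicator (fun _ => ε * C) x := by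
        refine integral_mono (integrable_mul_of_tsupport_subset hψ.isOpen hwc
          (continuous_spaceLap hχ.contDiff) (hasCompactSupport_spaceLap hχ.hasCompactSupport)
          (tsupport_spaceLap_subset.trans hχ.tsupport_subset)) (hLap.add hconst) fun x => ?_
        by_cases hx : x ∈ Ω
        · simpa only [indicator_of_mem hx] using
            hψ.mul_spaceLap_barrierCutoff_le hδ hε hx (hC x hx) (hw x) (hwε x hx)
        · simp [hx, spaceLap_eq_zero_of_notMem_tsupport fun h => hx (hχ.tsupport_subset h)]
    _ = ε * (C * volume.real Ω) := by
        rw [integral_add hLap hconst, integral_const_mul,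
          integral_spaceLap_eq_zero hχ.contDiff hχ.hasCompactSupport,
          integral_indicator_const _ hψ.isOpen.measurableSet, smul_eq_mul]
        ring

theorem setIntegral_mul_le_integral_mul_barrierCutoff_add (hψ : IsBarrier Ω K ψ) (hδ : 0 < δ)
    (hwc : ContinuousOn w K) (hw : ∀ x, 0 ≤ w x) :
    ∫ x in Ω, w x * ψ x ≤
      (∫ x, w x * barrierCutoff Ω ψ δ x) + 2 * δ * ∫ x in Ω, w x := by
  have hχ := hψ.isTestFunction_barrierCutoff hδ
  have integrableOn : ∀ f : 𝔼 d → ℝ, Continuous f → IntegrableOn (fun x => w x * f x) Ω :=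
    fun f hf => ((hwc.mul hf.continuousOn).integrableOn_compact hψ.isCompact).mono_set hψ.subset
  have hΩ : ∫ x, w x * barrierCutoff Ω ψ δ x = ∫ x in Ω, w x * barrierCutoff Ω ψ δ x :=
    (setIntegral_eq_integral_of_forall_compl_eq_zero fun x hx => by
      rw [hχ.apply_eq_zero hx, mul_zero]).symm
  rw [hΩ, mul_comm (2 * δ), ← integral_mul_const, ← integral_add
    (integrableOn _ hχ.contDiff.continuous) (integrableOn _ continuous_const)]
  refine setIntegral_mono_on (integrableOn _ hψ.contDiff.continuous)
    ((integrableOn _ hχ.contDiff.continuous).add (integrableOn _ continuous_const))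
    hψ.isOpen.measurableSet fun x hx => ?_
  rw [← mul_add]
  refine mul_le_mul_of_nonneg_left ?_ (hw x)
  rw [barrierCutoff, indicator_of_mem hx]
  linarith [max_sub_le_smoothRamp (s := ψ x) hδ, le_max_left (ψ x) 0]

theorem nonpos_of_setIntegral_posPart_mul_nonpos (hψ : IsBarrier Ω K ψ) (hwc : ContinuousOn w K)
    (h : ∫ x in Ω, max (w x) 0 * ψ x ≤ 0) : ∀ x ∈ Ω, w x ≤ 0 := by
  have hcont : ContinuousOn (fun x => max (w x) 0 * ψ x) K :=
    (hwc.sup continuousOn_const).mul hψ.contDiff.continuous.continuousOn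
  have hnonneg : ∀ x ∈ Ω, 0 ≤ max (w x) 0 * ψ x := fun x hx =>
    mul_nonneg (le_max_right _ _) (hψ.pos x hx).le
  have hae := (setIntegral_eq_zero_iff_of_nonneg_ae
    (ae_restrict_of_forall_mem hψ.isOpen.measurableSet hnonneg)
    ((hcont.integrableOn_compact hψ.isCompact).mono_set hψ.subset)).1
    (h.antisymm (setIntegral_nonneg hψ.isOpen.measurableSet hnonneg))
  intro x hx
  have hzero : max (w x) 0 * ψ x = 0 :=
    Measure.eqOn_open_of_ae_eq hae hψ.isOpen (hcont.mono hψ.subset) continuousOn_const hx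
  exact max_eq_right_iff.1 ((mul_eq_zero.1 hzero).resolve_right (hψ.pos x hx).ne')

end IsBarrier

namespace IsFDESol

variable {m T : ℝ} {Ω K : Set (𝔼 d)} {ψ : 𝔼 d → ℝ} {u v : ℝ → 𝔼 d → ℝ}

theorem setIntegral_posPart_sub_mul_le (hm : 0 < m) (hψ : IsBarrier Ω K ψ) (hT : 0 < T)
    (hu : IsFDESol m (Ioo 0 T ×ˢ Ω) u) (hv : IsFDESol m (Ioo 0 T ×ˢ Ω) v)
    (huc : ContinuousOn (fun p : ℝ × 𝔼 d => u p.1 p.2) (Icc 0 T ×ˢ K))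
    (hvc : ContinuousOn (fun p : ℝ × 𝔼 d => v p.1 p.2) (Icc 0 T ×ˢ K))
    (hinit : ∀ x ∈ Ω, u 0 x ≤ v 0 x) {δ ε C : ℝ} (hδ : 0 < δ) (hε : 0 ≤ ε)
    (hC : ∀ x ∈ Ω, |spaceLap ψ x| ≤ C)
    (hnear : ∀ t ∈ Icc 0 T, ∀ x ∈ K, ψ x ≤ 2 * δ → u t x ^ m - v t x ^ m ≤ ε) :
    ∫ x in Ω, max (u T x - v T x) 0 * ψ x ≤
      T * (ε * (C * volume.real Ω)) + 2 * δ * ∫ x in Ω, max (u T x - v T x) 0 := by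
  have hχ := hψ.isTestFunction_barrierCutoff hδ
  have hsub : Icc 0 T ×ˢ Ω ⊆ Icc 0 T ×ˢ K := prod_mono_right hψ.subset
  have hflux : ∀ τ ∈ Ioo 0 T, ∫ x, max (u τ x ^ m - v τ x ^ m) 0 *
      spaceLap (barrierCutoff Ω ψ δ) x ≤ ε * (C * volume.real Ω) := fun τ hτ =>
    hψ.integral_mul_spaceLap_barrierCutoff_le hδ hε hC
      (((hu.contDiffOn_rpow isOpen_Ioo hψ.isOpen hτ).continuousOn.sub
        (hv.contDiffOn_rpow isOpen_Ioo hψ.isOpen hτ).continuousOn).sup continuousOn_const)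
      (fun _ => le_max_right _ _)
      fun x hx hψx => max_le (hnear τ (Ioo_subset_Icc_self hτ) x (hψ.subset hx) hψx) hε
  have hcontraction := integral_posPart_sub_mul_le hm hT hψ.isOpen hu hv (huc.mono hsub)
    (hvc.mono hsub) hχ hflux
  have hzero : ∫ x, max (u 0 x - v 0 x) 0 * barrierCutoff Ω ψ δ x = 0 := by
    refine integral_eq_zero_of_ae (ae_of_all _ fun x => ?_)
    by_cases hx : x ∈ Ω
    · simp [hinit x hx]
    · simp [hχ.apply_eq_zero hx]
  have hslice : ContinuousOn (fun x => max (u T x - v T x) 0) K :=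
    ((huc.sub hvc).comp (by fun_prop : Continuous fun x : 𝔼 d => (T, x)).continuousOn
      fun x hx => ⟨right_mem_Icc.2 hT.le, hx⟩).sup continuousOn_const
  have hcutoff := hψ.setIntegral_mul_le_integral_mul_barrierCutoff_add hδ hslice
    fun _ => le_max_right _ _
  linarith

theorem setIntegral_posPart_sub_mul_nonpos (hm : 0 < m) (hψ : IsBarrier Ω K ψ) (hT : 0 < T)
    (hu : IsFDESol m (Ioo 0 T ×ˢ Ω) u) (hv : IsFDESol m (Ioo 0 T ×ˢ Ω) v)
    (huc : ContinuousOn (fun p : ℝ × 𝔼 d => u p.1 p.2) (Icc 0 T ×ˢ K))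
    (hvc : ContinuousOn (fun p : ℝ × 𝔼 d => v p.1 p.2) (Icc 0 T ×ˢ K))
    (hu0 : ∀ t ∈ Icc 0 T, ∀ x ∈ K, 0 ≤ u t x) (hinit : ∀ x ∈ Ω, u 0 x ≤ v 0 x)
    (hbd : ∀ t ∈ Icc 0 T, ∀ x ∈ K, x ∉ Ω → u t x ≤ v t x) :
    ∫ x in Ω, max (u T x - v T x) 0 * ψ x ≤ 0 := by
  obtain ⟨C, hC⟩ := hψ.isCompact.exists_bound_of_continuousOn
    (continuous_spaceLap hψ.contDiff).continuousOn
  have hD : ContinuousOn (fun p : ℝ × 𝔼 d => u p.1 p.2 ^ m - v p.1 p.2 ^ m) (Icc 0 T ×ˢ K) :=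
    (huc.rpow_const fun _ _ => Or.inr hm.le).sub (hvc.rpow_const fun _ _ => Or.inr hm.le)
  have hbound : ∀ ε > 0, ∫ x in Ω, max (u T x - v T x) 0 * ψ x ≤
      ε * (T * (C * volume.real Ω) + ∫ x in Ω, max (u T x - v T x) 0) := by
    intro ε hε
    obtain ⟨δ, hδ, hnear⟩ := exists_pos_forall_le_imp_lt (isCompact_Icc.prod hψ.isCompact) hD
      (g := fun p => ψ p.2) (hψ.contDiff.continuous.comp continuous_snd).continuousOn
      fun p hp hψp => by
        have hp2 : p.2 ∉ Ω := fun h => (hψ.pos _ h).not_ge hψp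
        have := rpow_le_rpow (hu0 p.1 hp.1 p.2 hp.2) (hbd p.1 hp.1 p.2 hp.2 hp2) hm.le
        linarith
    have hbound := setIntegral_posPart_sub_mul_le hm hψ hT hu hv huc hvc hinit
      (δ := min δ ε / 2) (by positivity) hε.le (fun x hx => hC x (hψ.subset hx))
      fun t ht x hx hψx => (hnear (t, x) ⟨ht, hx⟩ (by
        linarith [min_le_left δ ε] : ψ x ≤ δ)).le
    have hmass : 0 ≤ ∫ x in Ω, max (u T x - v T x) 0 := integral_nonneg fun _ => le_max_right _ _
    nlinarith [mul_le_mul_of_nonneg_right (min_le_right δ ε) hmass]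
  exact ge_of_tendsto (Continuous.tendsto' (by fun_prop) 0 0 (by simp) |>.mono_left
    nhdsWithin_le_nhds) (eventually_nhdsWithin_of_forall (s := Ioi (0 : ℝ)) hbound)

theorem le_of_isBarrier (hm : 0 < m) (hψ : IsBarrier Ω K ψ)
    (hu : IsFDESol m (Ioo 0 T ×ˢ Ω) u) (hv : IsFDESol m (Ioo 0 T ×ˢ Ω) v)
    (huc : ContinuousOn (fun p : ℝ × 𝔼 d => u p.1 p.2) (Icc 0 T ×ˢ K))
    (hvc : ContinuousOn (fun p : ℝ × 𝔼 d => v p.1 p.2) (Icc 0 T ×ˢ K))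
    (hu0 : ∀ t ∈ Icc 0 T, ∀ x ∈ K, 0 ≤ u t x) (hinit : ∀ x ∈ Ω, u 0 x ≤ v 0 x)
    (hbd : ∀ t ∈ Icc 0 T, ∀ x ∈ K, x ∉ Ω → u t x ≤ v t x) :
    ∀ t ∈ Ioc 0 T, ∀ x ∈ Ω, u t x ≤ v t x := by
  intro t ht x hx
  have hIcc : Icc 0 t ⊆ Icc 0 T := Icc_subset_Icc_right ht.2
  have hIoo : Ioo 0 t ×ˢ Ω ⊆ Ioo 0 T ×ˢ Ω := prod_mono_left (Ioo_subset_Ioo_right ht.2)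
  have hslice : ContinuousOn (fun x => u t x - v t x) K :=
    (huc.sub hvc).comp (by fun_prop : Continuous fun x : 𝔼 d => (t, x)).continuousOn
      fun x hx => ⟨Ioc_subset_Icc_self ht, hx⟩
  exact sub_nonpos.1 <| hψ.nonpos_of_setIntegral_posPart_mul_nonpos hslice
    (setIntegral_posPart_sub_mul_nonpos hm hψ ht.1 (hu.mono hIoo) (hv.mono hIoo)
      (huc.mono (prod_mono_left hIcc)) (hvc.mono (prod_mono_left hIcc))
      (fun τ hτ => hu0 τ (hIcc hτ)) hinit fun τ hτ => hbd τ (hIcc hτ)) x hx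

end IsFDESol

end Comparison

section Barriers

theorem hasGradientAt_norm_sub_sq (a x : 𝔼 d) :
    HasGradientAt (fun y => ‖y - a‖ ^ 2) ((2 : ℝ) • (x - a)) x := by
  rw [hasGradientAt_iff_hasFDerivAt]
  refine ((hasFDerivAt_id x).sub_const a).norm_sq.congr_fderiv ?_
  ext v
  simp

theorem contDiff_norm_sub_sq (a : 𝔼 d) {n : WithTop ℕ∞} : ContDiff ℝ n fun y => ‖y - a‖ ^ 2 :=
  (contDiff_id.sub contDiff_const).norm_sq ℝ

theorem spaceLap_norm_sub_sq (a x : 𝔼 d) : spaceLap (fun y => ‖y - a‖ ^ 2) x = 2 * d := by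
  simp only [spaceLap, (hasGradientAt_norm_sub_sq a _).fderiv_apply]
  have hpartial : ∀ i : Fin d, fderiv ℝ (fun y => ⟪(2 : ℝ) • (y - a), EuclideanSpace.single i 1⟫_ℝ)
      x (EuclideanSpace.single i 1) = 2 := fun i => by
    refine (congrArg (· (EuclideanSpace.single i 1)) ((((hasFDerivAt_id x).sub_const a).const_smul
      (2 : ℝ)).inner ℝ (hasFDerivAt_const (EuclideanSpace.single i 1) x)).fderiv).trans ?_
    simp [inner_smul_left]
  simp [hpartial, mul_comm]

theorem isBarrier_ball (a : 𝔼 d) (r : ℝ) :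
    IsBarrier (ball a r) (closedBall a r) fun y => r ^ 2 - ‖y - a‖ ^ 2 where
  isOpen := isOpen_ball
  isCompact := isCompact_closedBall a r
  subset := ball_subset_closedBall
  contDiff := contDiff_const.sub (contDiff_norm_sub_sq a)
  pos y hy := by
    rw [mem_ball_iff_norm] at hy
    nlinarith [norm_nonneg (y - a)]
  nonpos y hy hy' := by
    rw [mem_closedBall_iff_norm] at hy
    rw [mem_ball_iff_norm, not_lt] at hy'
    rw [hy.antisymm hy', sub_self]
  spaceLap_nonpos y _ := by
    rw [spaceLap_sub contDiffAt_const (contDiff_norm_sub_sq a).contDiffAt, spaceLap_const,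
      spaceLap_norm_sub_sq, zero_sub, neg_nonpos]
    positivity

theorem spaceLap_halfSpace_mul_ball (a x y : 𝔼 d) (r : ℝ) :
    spaceLap (fun z => (‖z - a‖ ^ 2 - ‖z - x‖ ^ 2) * (r ^ 2 - ‖z - a‖ ^ 2)) y =
      -(2 * d) * (‖y - a‖ ^ 2 - ‖y - x‖ ^ 2) - 8 * ⟪x - a, y - a⟫_ℝ := by
  have hhalf : HasGradientAt (fun z => ‖z - a‖ ^ 2 - ‖z - x‖ ^ 2) ((2 : ℝ) • (x - a)) y := by
    rw [hasGradientAt_iff_hasFDerivAt]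
    refine ((hasGradientAt_norm_sub_sq a y).hasFDerivAt.sub
      (hasGradientAt_norm_sub_sq x y).hasFDerivAt).congr_fderiv ?_
    rw [← map_sub]
    congr 1
    module
  have hball : HasGradientAt (fun z => r ^ 2 - ‖z - a‖ ^ 2) ((-2 : ℝ) • (y - a)) y := by
    rw [hasGradientAt_iff_hasFDerivAt]
    refine ((hasGradientAt_norm_sub_sq a y).hasFDerivAt.const_sub _).congr_fderiv ?_
    rw [← map_neg, neg_smul]
  have hsq : ∀ b : 𝔼 d, ContDiffAt ℝ 2 (fun z => ‖z - b‖ ^ 2) y := fun b =>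
    (contDiff_norm_sub_sq b).contDiffAt
  rw [spaceLap_mul ((hsq a).sub (hsq x)) (contDiffAt_const.sub (hsq a)), hhalf.gradient,
    hball.gradient, spaceLap_sub contDiffAt_const (hsq a), spaceLap_sub (hsq a) (hsq x),
    spaceLap_const, spaceLap_norm_sub_sq, spaceLap_norm_sub_sq, inner_smul_left, inner_smul_right]
  simp only [conj_trivial]
  ring

theorem isBarrier_ball_inter_halfSpace (a x : 𝔼 d) (r : ℝ) :
    IsBarrier (ball a r ∩ {y | dist y x < dist y a}) (closedBall a r ∩ {y | dist y x ≤ dist y a})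
      fun y => (‖y - a‖ ^ 2 - ‖y - x‖ ^ 2) * (r ^ 2 - ‖y - a‖ ^ 2) where
  isOpen := isOpen_ball.inter (isOpen_lt (by fun_prop) (by fun_prop))
  isCompact := (isCompact_closedBall a r).inter_right (isClosed_le (by fun_prop) (by fun_prop))
  subset := inter_subset_inter ball_subset_closedBall fun _ => le_of_lt (α := ℝ)
  contDiff := ((contDiff_norm_sub_sq a).sub (contDiff_norm_sub_sq x)).mul
    (contDiff_const.sub (contDiff_norm_sub_sq a))
  pos y hy := by
    refine mul_pos (sub_pos.2 ?_) ((isBarrier_ball a r).pos y hy.1)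
    simpa only [← dist_eq_norm] using pow_lt_pow_left₀ hy.2 dist_nonneg two_ne_zero
  nonpos y hy hy' := by
    rcases (mem_closedBall.1 hy.1).eq_or_lt with hball | hball
    · rw [← hball, dist_eq_norm, sub_self, mul_zero]
    · have heq : dist y x = dist y a := hy.2.antisymm (not_lt.1 fun h => hy' ⟨hball, h⟩)
      rw [← dist_eq_norm, ← dist_eq_norm, heq, sub_self, zero_mul]
  spaceLap_nonpos y hy := by
    have hpos : 0 < ‖y - a‖ ^ 2 - ‖y - x‖ ^ 2 := by
      rw [sub_pos]
      simpa only [← dist_eq_norm] using pow_lt_pow_left₀ hy.2 dist_nonneg two_ne_zero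
    have hinner : 0 < ⟪x - a, y - a⟫_ℝ := by
      have := norm_sub_sq_real (y - a) (x - a)
      rw [sub_sub_sub_cancel_right, real_inner_comm] at this
      nlinarith [sq_nonneg ‖x - a‖]
    rw [spaceLap_halfSpace_mul_ball]
    nlinarith [mul_nonneg d.cast_nonneg hpos.le]

end Barriers

namespace IsFDESol

variable {m c k l : ℝ} {Q : Set (ℝ × 𝔼 d)} {u : ℝ → 𝔼 d → ℝ}

theorem const (hc : 0 < c) : IsFDESol m Q fun _ _ => c :=
  ⟨fun _ _ => hc, contDiffOn_const, fun _ _ => by simp [spaceLap_const]⟩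

theorem rescale (hu : IsFDESol m Q u) (hQ : IsOpen Q) (hk : 0 < k) (hkl : k * l = k ^ m) :
    IsFDESol m ((fun p : ℝ × 𝔼 d => (l * p.1, p.2)) ⁻¹' Q) fun t x => k * u (l * t) x := by
  have hscale : ContDiff ℝ (⊤ : ℕ∞) fun p : ℝ × 𝔼 d => (l * p.1, p.2) := by fun_prop
  refine ⟨fun p hp => mul_pos hk (hu.1 _ hp), contDiffOn_const.mul
    (hu.2.1.comp hscale.contDiffOn fun _ hp => hp), fun p hp => ?_⟩
  have hpow : (fun y => (k * u (l * p.1) y) ^ m) =ᶠ[𝓝 p.2]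
      fun y => k ^ m * u (l * p.1) y ^ m := by
    have hslice : Continuous fun y : 𝔼 d => (l * p.1, y) := by fun_prop
    filter_upwards [hslice.continuousAt.preimage_mem_nhds (hQ.mem_nhds hp)] with y hy
    exact mul_rpow hk.le (hu.1 _ hy).le
  have hderiv := ((hu.hasDerivAt hQ hp).scomp p.1 ((hasDerivAt_id p.1).const_mul l)).const_mul k
  rw [spaceLap_congr hpow, spaceLap_const_mul (hu.contDiffAt_rpow hQ hp), ← hkl]
  refine hderiv.deriv.trans ?_
  simp [mul_assoc]

theorem comp_affineIsometryEquiv (hu : IsFDESol m Q u) (hQ : IsOpen Q) (σ : 𝔼 d ≃ᵃⁱ[ℝ] 𝔼 d) :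
    IsFDESol m ((fun p : ℝ × 𝔼 d => (p.1, σ p.2)) ⁻¹' Q) fun t x => u t (σ x) := by
  have hσ : ContDiff ℝ (⊤ : ℕ∞) fun p : ℝ × 𝔼 d => (p.1, σ p.2) :=
    contDiff_fst.prodMk (σ.toAffineIsometry.toContinuousAffineMap.contDiff.comp contDiff_snd)
  refine ⟨fun p hp => hu.1 _ hp, hu.2.1.comp hσ.contDiffOn fun _ hp => hp, fun p hp => ?_⟩
  rw [spaceLap_comp_affineIsometryEquiv σ (f := fun y => u p.1 y ^ m) (hu.contDiffAt_rpow hQ hp)]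
  exact hu.2.2 _ hp

end IsFDESol

theorem exists_affineIsometryEquiv_apply_eq (a x : 𝔼 d) :
    ∃ σ : 𝔼 d ≃ᵃⁱ[ℝ] 𝔼 d, σ x = a ∧ ∀ y, dist y a = dist y x → σ y = y := by
  set s := AffineSubspace.perpBisector a x with hs
  have : Nonempty s := AffineSubspace.perpBisector_nonempty.to_subtype
  refine ⟨EuclideanGeometry.reflection s, ?_, fun y hy =>
    (EuclideanGeometry.reflection_eq_self_iff y).2
      (AffineSubspace.mem_perpBisector_iff_dist_eq.2 hy)⟩
  have hv : x -ᵥ midpoint ℝ a x ∈ s.directionᗮ := by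
    rw [hs, AffineSubspace.direction_perpBisector, right_vsub_midpoint]
    exact Submodule.le_orthogonal_orthogonal _
      (Submodule.smul_mem _ _ (Submodule.mem_span_singleton_self _))
  calc EuclideanGeometry.reflection s x
      = EuclideanGeometry.reflection s ((x -ᵥ midpoint ℝ a x) +ᵥ midpoint ℝ a x) := by
        rw [vsub_vadd]
    _ = -(x -ᵥ midpoint ℝ a x) +ᵥ midpoint ℝ a x :=
        EuclideanGeometry.reflection_orthogonal_vadd
          (AffineSubspace.midpoint_mem_perpBisector a x) hv
    _ = (a -ᵥ midpoint ℝ a x) +ᵥ midpoint ℝ a x := by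
        rw [right_vsub_midpoint, left_vsub_midpoint, ← smul_neg, neg_vsub_eq_vsub_rev]
    _ = a := vsub_vadd _ _

namespace IsDirichletSol

variable {m R R₀ T t l : ℝ} {x₀ x : 𝔼 d} {u : ℝ → 𝔼 d → ℝ} {u₀ : 𝔼 d → ℝ}

theorem nonneg (h : IsDirichletSol m x₀ R₀ T u u₀) (ht : t ∈ Icc 0 T)
    (hx : x ∈ closedBall x₀ R₀) : 0 ≤ u t x :=
  h.1 t ht x hx

theorem continuousOn (h : IsDirichletSol m x₀ R₀ T u u₀) :
    ContinuousOn (fun p : ℝ × 𝔼 d => u p.1 p.2) (Icc 0 T ×ˢ closedBall x₀ R₀) :=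
  h.2.1

theorem isFDESol (h : IsDirichletSol m x₀ R₀ T u u₀) : IsFDESol m (Ioo 0 T ×ˢ ball x₀ R₀) u :=
  h.2.2.1

theorem apply_zero (h : IsDirichletSol m x₀ R₀ T u u₀) (hx : x ∈ ball x₀ R₀) : u 0 x = u₀ x :=
  h.2.2.2.1 x hx

theorem eq_zero_of_mem_sphere (h : IsDirichletSol m x₀ R₀ T u u₀) (hT : 0 < T)
    (ht : t ∈ Icc 0 T) (hx : x ∈ sphere x₀ R₀) : u t x = 0 := by
  have hcont : ContinuousOn (u · x) (closure (Ioc 0 T)) := by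
    rw [closure_Ioc hT.ne]
    exact h.continuousOn.comp (by fun_prop : Continuous fun τ : ℝ => (τ, x)).continuousOn
      fun τ hτ => ⟨hτ, sphere_subset_closedBall hx⟩
  rw [← closure_Ioc hT.ne] at ht
  exact EqOn.of_subset_closure (g := fun _ => 0) (fun τ hτ => h.2.2.2.2.1 τ hτ x hx) hcont
    continuousOn_const subset_closure subset_rfl ht

-- Bénilan-Crandall: `l ^ (-1 / (1 - m)) * u (l * t) x` is a solution too, and it starts below `u`.
theorem apply_mul_le (hm : 0 < m) (hm1 : m < 1) (h : IsDirichletSol m x₀ R₀ T u u₀) (hl : 1 ≤ l)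
    (ht : 0 < t) (hlt : l * t ≤ T) (hx : x ∈ ball x₀ R₀) :
    u (l * t) x ≤ l ^ (1 / (1 - m)) * u t x := by
  have hl0 : 0 < l := one_pos.trans_le hl
  have hT : 0 < T := (mul_pos hl0 ht).trans_le hlt
  have hTl : T / l ≤ T := div_le_self hT.le hl
  have hIcc : ∀ τ ∈ Icc 0 (T / l), l * τ ∈ Icc 0 T := fun τ hτ =>
    ⟨mul_nonneg hl0.le hτ.1, (le_div_iff₀' hl0).1 hτ.2⟩
  have hIoo : ∀ τ ∈ Ioo 0 (T / l), l * τ ∈ Ioo 0 T := fun τ hτ =>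
    ⟨mul_pos hl0 hτ.1, (lt_div_iff₀' hl0).1 hτ.2⟩
  set k := (l ^ (1 / (1 - m)))⁻¹ with hk
  have hk0 : 0 < k := by positivity
  have hk1 : k ≤ 1 := inv_le_one_of_one_le₀ (one_le_rpow hl (one_div_nonneg.2 (by linarith)))
  have hkl : k * l = k ^ m := by
    have hm1' : 1 - m ≠ 0 := (sub_pos.2 hm1).ne'
    rw [hk, ← rpow_neg hl0.le, ← rpow_mul hl0.le, ← rpow_add_one hl0.ne']
    congr 1
    field_simp
    ring
  have hcomparison := IsFDESol.le_of_isBarrier hm (isBarrier_ball x₀ R₀)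
    ((h.isFDESol.rescale (isOpen_Ioo.prod isOpen_ball) hk0 hkl).mono
      fun p hp => ⟨hIoo p.1 hp.1, hp.2⟩)
    (h.isFDESol.mono (prod_mono_left (Ioo_subset_Ioo_right hTl)))
    (continuousOn_const.mul (h.continuousOn.comp
      (by fun_prop : Continuous fun p : ℝ × 𝔼 d => (l * p.1, p.2)).continuousOn
      fun p hp => ⟨hIcc p.1 hp.1, hp.2⟩))
    (h.continuousOn.mono (prod_mono_left (Icc_subset_Icc_right hTl)))
    (fun τ hτ y hy => mul_nonneg hk0.le (h.nonneg (hIcc τ hτ) hy))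
    (fun y hy => by
      rw [mul_zero]
      exact mul_le_of_le_one_left
        (h.nonneg (left_mem_Icc.2 hT.le) (ball_subset_closedBall hy)) hk1)
    (fun τ hτ y hy hy' => by
      have hsphere : y ∈ sphere x₀ R₀ := (mem_closedBall.1 hy).antisymm (not_lt.1 hy')
      rw [h.eq_zero_of_mem_sphere hT (hIcc τ hτ) hsphere, mul_zero]
      exact h.nonneg (Icc_subset_Icc_right hTl hτ) hy)
    t ⟨ht, (le_div_iff₀' hl0).2 hlt⟩ x hx
  rwa [hk, inv_mul_le_iff₀ (by positivity)] at hcomparison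

-- Aleksandrov reflection: the data vanish on the side of the bisector of `x₀` and `x` containing
-- `x`, so there `u` stays below its mirror image.
theorem apply_le_apply_center (hm : 0 < m) (h : IsDirichletSol m x₀ R₀ T u u₀)
    (hsupp : Function.support u₀ ⊆ closedBall x₀ R) (hT : 0 < T) (ht : t ∈ Ioc 0 T)
    (hx : x ∈ ball x₀ R₀) (hxR : x ∉ ball x₀ (2 * R)) : u t x ≤ u t x₀ := by
  rcases eq_or_ne x x₀ with rfl | hne
  · rfl
  obtain ⟨σ, hσx, hσfix⟩ := exists_affineIsometryEquiv_apply_eq x₀ x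
  have hdist : ∀ y, dist (σ y) x₀ = dist y x := fun y => by rw [← hσx, σ.dist_map]
  have hΩ : ∀ y ∈ ball x₀ R₀ ∩ {y | dist y x < dist y x₀}, σ y ∈ ball x₀ R₀ := fun y hy =>
    (hdist y).trans_lt (hy.2.trans hy.1)
  have hK : ∀ y ∈ closedBall x₀ R₀ ∩ {y | dist y x ≤ dist y x₀}, σ y ∈ closedBall x₀ R₀ :=
    fun y hy => (hdist y).trans_le (hy.2.trans hy.1)
  have hcomparison := IsFDESol.le_of_isBarrier hm (isBarrier_ball_inter_halfSpace x₀ x R₀)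
    (h.isFDESol.mono (prod_mono_right inter_subset_left))
    ((h.isFDESol.comp_affineIsometryEquiv (isOpen_Ioo.prod isOpen_ball) σ).mono
      fun p hp => ⟨hp.1, hΩ p.2 hp.2⟩)
    (h.continuousOn.mono (prod_mono_right inter_subset_left))
    (h.continuousOn.comp
      (continuous_fst.prodMk (σ.continuous.comp continuous_snd)).continuousOn
      fun p hp => ⟨hp.1, hK p.2 hp.2⟩)
    (fun τ hτ y hy => h.nonneg hτ hy.1)
    (fun y hy => by
      have hfar : y ∉ closedBall x₀ R := fun hyR => by
        have := dist_triangle_left x x₀ y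
        rw [mem_ball, not_lt] at hxR
        rw [mem_closedBall] at hyR
        linarith [hy.2.out]
      rw [h.apply_zero hy.1, Function.notMem_support.1 fun hy' => hfar (hsupp hy')]
      exact h.nonneg (left_mem_Icc.2 hT.le) (ball_subset_closedBall (hΩ y hy)))
    (fun τ hτ y hy hy' => by
      rcases hy.1.out.eq_or_lt with hsphere | hball
      · rw [h.eq_zero_of_mem_sphere hT hτ hsphere]
        exact h.nonneg hτ (hK y hy)
      · have heq : dist y x₀ = dist y x := (not_lt.1 fun hlt => hy' ⟨hball, hlt⟩).antisymm hy.2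
        rw [hσfix y heq])
    t ht x ⟨hx, by simpa using hne⟩
  rwa [hσx] at hcomparison

end IsDirichletSol

section Cutoff

theorem hasCompactSupport_deriv_smoothTransition :
    HasCompactSupport (deriv smoothTransition) := by
  refine HasCompactSupport.intro (isCompact_Icc (a := 0) (b := 1)) fun s hs => ?_
  rw [mem_Icc, not_and_or, not_le, not_le] at hs
  rcases hs with hs | hs
  · have hzero : smoothTransition =ᶠ[𝓝 s] fun _ => 0 := by
      filter_upwards [Iio_mem_nhds hs] with y hy using smoothTransition.zero_of_nonpos hy.le
    rw [hzero.deriv_eq, deriv_const]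
  · have hone : smoothTransition =ᶠ[𝓝 s] fun _ => 1 := by
      filter_upwards [Ioi_mem_nhds hs] with y hy using smoothTransition.one_of_one_le hy.le
    rw [hone.deriv_eq, deriv_const]

theorem exists_abs_deriv_smoothTransition_le :
    ∃ C > 0, ∀ s, |deriv smoothTransition s| ≤ C ∧ |deriv (deriv smoothTransition) s| ≤ C := by
  have hderiv : ContDiff ℝ 1 (deriv smoothTransition) :=
    ((contDiff_succ_iff_deriv (n := 1)).1 smoothTransition.contDiff).2.2
  obtain ⟨C₁, hC₁⟩ := hderiv.continuous.bounded_above_of_compact_support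
    hasCompactSupport_deriv_smoothTransition
  obtain ⟨C₂, hC₂⟩ := (hderiv.continuous_deriv le_rfl).bounded_above_of_compact_support
    hasCompactSupport_deriv_smoothTransition.deriv
  exact ⟨max 1 (max C₁ C₂), by positivity, fun s =>
    ⟨(hC₁ s).trans (by simp), (hC₂ s).trans (by simp)⟩⟩

/-- The radial cutoff around `a` that equals `1` on the ball of radius `r` and `0` outside the ball
of radius `s`. It is a function of the squared distance, hence smooth at `a` as well. -/
noncomputable def radialCutoff (a : 𝔼 d) (r s : ℝ) (y : 𝔼 d) : ℝ :=
  smoothTransition ((s ^ 2 - r ^ 2)⁻¹ * (s ^ 2 - ‖y - a‖ ^ 2))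

variable {a x : 𝔼 d} {r s R L : ℝ} {φ : 𝔼 d → ℝ}

theorem contDiff_radialCutoff (a : 𝔼 d) (r s : ℝ) : ContDiff ℝ 2 (radialCutoff a r s) :=
  smoothTransition.contDiff.comp
    (contDiff_const.mul (contDiff_const.sub (contDiff_norm_sub_sq a)))

theorem radialCutoff_eq_one (hr : 0 ≤ r) (hrs : r < s) (hx : x ∈ closedBall a r) :
    radialCutoff a r s x = 1 := by
  have hpos : 0 < s ^ 2 - r ^ 2 := by nlinarith
  rw [mem_closedBall_iff_norm] at hx
  refine smoothTransition.one_of_one_le ?_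
  rw [le_inv_mul_iff₀ hpos, mul_one]
  gcongr

theorem tsupport_radialCutoff_subset (hr : 0 ≤ r) (hrs : r < s) :
    tsupport (radialCutoff a r s) ⊆ closedBall a s := by
  refine closure_minimal (fun x => not_imp_comm.1 fun hx => ?_) isClosed_closedBall
  rw [mem_closedBall_iff_norm, not_le] at hx
  refine smoothTransition.zero_of_nonpos (mul_nonpos_of_nonneg_of_nonpos ?_ ?_)
  · exact inv_nonneg.2 (by nlinarith)
  · nlinarith

theorem spaceLap_radialCutoff (a x : 𝔼 d) (r s : ℝ) :
    spaceLap (radialCutoff a r s) x =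
      deriv smoothTransition ((s ^ 2 - r ^ 2)⁻¹ * (s ^ 2 - ‖x - a‖ ^ 2)) *
          ((s ^ 2 - r ^ 2)⁻¹ * -(2 * d)) +
        deriv (deriv smoothTransition) ((s ^ 2 - r ^ 2)⁻¹ * (s ^ 2 - ‖x - a‖ ^ 2)) *
          (2 * ((s ^ 2 - r ^ 2)⁻¹ * ‖x - a‖)) ^ 2 := by
  set k := (s ^ 2 - r ^ 2)⁻¹
  have hsq : ContDiffAt ℝ 2 (fun y => ‖y - a‖ ^ 2) x := (contDiff_norm_sub_sq a).contDiffAt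
  have hdiff : ContDiffAt ℝ 2 (fun y => s ^ 2 - ‖y - a‖ ^ 2) x := contDiffAt_const.sub hsq
  have hgrad : HasGradientAt (fun y => k * (s ^ 2 - ‖y - a‖ ^ 2)) ((-2 * k) • (x - a)) x := by
    rw [hasGradientAt_iff_hasFDerivAt]
    refine (((hasGradientAt_norm_sub_sq a x).hasFDerivAt.const_sub _).const_mul k).congr_fderiv ?_
    rw [← map_neg, ← map_smul]
    congr 1
    module
  refine (spaceLap_comp smoothTransition.contDiff.contDiffAt (contDiffAt_const.mul hdiff)).trans ?_
  rw [spaceLap_const_mul hdiff, spaceLap_sub contDiffAt_const hsq, spaceLap_const,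
    spaceLap_norm_sub_sq, hgrad.gradient, norm_smul, zero_sub, mul_pow, norm_eq_abs, sq_abs]
  ring

theorem exists_abs_spaceLap_radialCutoff_le (d : ℕ) :
    ∃ C > 0, ∀ (a : 𝔼 d) (r s : ℝ), 0 ≤ r → r < s →
      ∀ x, |spaceLap (radialCutoff a r s) x| ≤ C / (s - r) ^ 2 := by
  obtain ⟨C, hC, hbound⟩ := exists_abs_deriv_smoothTransition_le
  refine ⟨C * (2 * d + 4), by positivity, fun a r s hr hrs x => ?_⟩
  by_cases hx : x ∈ tsupport (radialCutoff a r s)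
  swap
  · rw [spaceLap_eq_zero_of_notMem_tsupport hx, abs_zero]
    positivity
  have hxs : ‖x - a‖ ≤ s := mem_closedBall_iff_norm.1 (tsupport_radialCutoff_subset hr hrs hx)
  have hgap : 0 < s - r := sub_pos.2 hrs
  have hsq : 0 < s ^ 2 - r ^ 2 := by nlinarith
  have hk : (s ^ 2 - r ^ 2)⁻¹ ≤ ((s - r) ^ 2)⁻¹ := by
    gcongr
    nlinarith
  have hkx : (s ^ 2 - r ^ 2)⁻¹ * ‖x - a‖ ≤ (s - r)⁻¹ := by
    rw [inv_mul_le_iff₀ hsq, ← div_eq_mul_inv, le_div_iff₀ hgap]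
    nlinarith
  rw [spaceLap_radialCutoff]
  set A := deriv smoothTransition ((s ^ 2 - r ^ 2)⁻¹ * (s ^ 2 - ‖x - a‖ ^ 2))
  set B := deriv (deriv smoothTransition) ((s ^ 2 - r ^ 2)⁻¹ * (s ^ 2 - ‖x - a‖ ^ 2))
  calc |A * ((s ^ 2 - r ^ 2)⁻¹ * -(2 * d)) + B * (2 * ((s ^ 2 - r ^ 2)⁻¹ * ‖x - a‖)) ^ 2|
      ≤ |A * ((s ^ 2 - r ^ 2)⁻¹ * -(2 * d))| +
          |B * (2 * ((s ^ 2 - r ^ 2)⁻¹ * ‖x - a‖)) ^ 2| := abs_add_le _ _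
    _ = |A| * ((s ^ 2 - r ^ 2)⁻¹ * (2 * d)) +
          |B| * (2 * ((s ^ 2 - r ^ 2)⁻¹ * ‖x - a‖)) ^ 2 := by
        rw [mul_neg, mul_neg, abs_neg, abs_mul, abs_mul B, abs_sq,
          abs_of_nonneg (by positivity : 0 ≤ (s ^ 2 - r ^ 2)⁻¹ * (2 * (d : ℝ)))]
    _ ≤ C * (((s - r) ^ 2)⁻¹ * (2 * d)) + C * (2 * (s - r)⁻¹) ^ 2 := by
        gcongr
        exacts [(hbound _).1, (hbound _).2]
    _ = C * (2 * d + 4) / (s - r) ^ 2 := by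
        field_simp
        ring

/-- A test function on the ball of radius `R` that equals `1` on the ball of radius `r`; its
Laplacian lives on the annulus in between and is bounded by `L`. -/
structure IsAnnularCutoff (a : 𝔼 d) (r R L : ℝ) (φ : 𝔼 d → ℝ) : Prop
    extends IsTestFunction (ball a R) φ where
  eq_one : ∀ x ∈ closedBall a r, φ x = 1
  abs_spaceLap_le : ∀ x, |spaceLap φ x| ≤ L

theorem IsAnnularCutoff.bound_nonneg (hφ : IsAnnularCutoff a r R L φ) : 0 ≤ L :=
  (abs_nonneg _).trans (hφ.abs_spaceLap_le a)

theorem IsAnnularCutoff.spaceLap_eq_zero (hφ : IsAnnularCutoff a r R L φ)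
    (hx : x ∉ ball a R \ ball a r) : spaceLap φ x = 0 := by
  by_cases hxr : x ∈ ball a r
  · have hone : φ =ᶠ[𝓝 x] fun _ => 1 := by
      filter_upwards [isOpen_ball.mem_nhds hxr] with y hy
      exact hφ.eq_one y (ball_subset_closedBall hy)
    rw [spaceLap_congr hone, spaceLap_const]
  · exact spaceLap_eq_zero_of_notMem_tsupport fun h => hx ⟨hφ.tsupport_subset h, hxr⟩

theorem exists_isAnnularCutoff (d : ℕ) :
    ∃ C > 0, ∀ (a : 𝔼 d) (r R : ℝ), 0 ≤ r → r < R →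
      ∃ φ, IsAnnularCutoff a r R (C / (R - r) ^ 2) φ := by
  obtain ⟨C, hC, hbound⟩ := exists_abs_spaceLap_radialCutoff_le d
  refine ⟨4 * C, by positivity, fun a r R hr hrR => ?_⟩
  have hrs : r < (r + R) / 2 := by linarith
  have hsupp := tsupport_radialCutoff_subset (a := a) hr hrs
  refine ⟨radialCutoff a r ((r + R) / 2), ⟨contDiff_radialCutoff a r _,
    fun _ => smoothTransition.nonneg _,
    (isCompact_closedBall a _).of_isClosed_subset (isClosed_tsupport _) hsupp,
    hsupp.trans (closedBall_subset_ball (by linarith))⟩,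
    fun _ => radialCutoff_eq_one hr hrs, fun x => ?_⟩
  refine (hbound a r _ hr hrs x).trans_eq ?_
  rw [show (r + R) / 2 - r = (R - r) / 2 by ring, div_pow, div_div_eq_mul_div]
  ring

end Cutoff

namespace IsDirichletSol

variable {m R R₀ T t : ℝ} {x₀ : 𝔼 d} {u : ℝ → 𝔼 d → ℝ} {u₀ : 𝔼 d → ℝ}

theorem continuousOn_slice (h : IsDirichletSol m x₀ R₀ T u u₀) (ht : t ∈ Icc 0 T) :
    ContinuousOn (u t) (closedBall x₀ R₀) :=
  h.continuousOn.comp (by fun_prop : Continuous fun x : 𝔼 d => (t, x)).continuousOn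
    fun _ hx => ⟨ht, hx⟩

theorem integrableOn_slice (h : IsDirichletSol m x₀ R₀ T u u₀) (ht : t ∈ Icc 0 T) :
    IntegrableOn (u t) (ball x₀ R₀) :=
  ((h.continuousOn_slice ht).integrableOn_compact (isCompact_closedBall _ _)).mono_set
    ball_subset_closedBall

theorem exists_radius_forall_notMem_ball_lt (h : IsDirichletSol m x₀ R₀ T u u₀) (hT : 0 < T)
    (hR₀ : 0 < R₀) {η : ℝ} (hη : 0 < η) :
    ∃ r, 0 ≤ r ∧ r < R₀ ∧ ∀ t ∈ Icc 0 T, ∀ x ∈ ball x₀ R₀, x ∉ ball x₀ r → u t x < η := by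
  obtain ⟨δ, hδ, hsmall⟩ := exists_pos_forall_le_imp_lt
    (isCompact_Icc.prod (isCompact_closedBall x₀ R₀)) h.continuousOn
    (g := fun p => R₀ - dist p.2 x₀) (by fun_prop) (ε := η) fun p hp hpR => by
      rwa [h.eq_zero_of_mem_sphere hT hp.1 ((mem_closedBall.1 hp.2).antisymm (sub_nonpos.1 hpR))]
  refine ⟨max 0 (R₀ - δ), le_max_left _ _, max_lt hR₀ (by linarith), fun t ht x hx hxr => ?_⟩
  refine hsmall (t, x) ⟨ht, ball_subset_closedBall hx⟩ ?_
  rw [mem_ball, not_lt, max_le_iff] at hxr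
  linarith

-- Near the sphere `u` lies below the stationary solution `η`, so a cutoff that varies only there
-- sees no flux of `(u - η)₊`.
theorem setIntegral_posPart_sub_const_le (hm : 0 < m) (h : IsDirichletSol m x₀ R₀ T u u₀)
    (hR₀ : 0 < R₀) {η : ℝ} (hη : 0 < η) (ht : t ∈ Ioc 0 T) :
    ∫ x in ball x₀ R₀, max (u t x - η) 0 ≤ ∫ x in ball x₀ R₀, max (u 0 x - η) 0 := by
  have hT : 0 < T := ht.1.trans_le ht.2
  obtain ⟨r, hr, hrR, hsmall⟩ := h.exists_radius_forall_notMem_ball_lt hT hR₀ hη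
  obtain ⟨_, -, hcutoff⟩ := exists_isAnnularCutoff d
  obtain ⟨φ, hφ⟩ := hcutoff x₀ r R₀ hr hrR
  have hremove : ∀ τ ∈ Icc 0 T,
      ∫ x, max (u τ x - η) 0 * φ x = ∫ x in ball x₀ R₀, max (u τ x - η) 0 := fun τ hτ => by
    rw [← setIntegral_eq_integral_of_forall_compl_eq_zero (s := ball x₀ R₀)
      fun x hx => by rw [hφ.apply_eq_zero hx, mul_zero]]
    refine setIntegral_congr_fun measurableSet_ball fun x hx => ?_
    by_cases hxr : x ∈ ball x₀ r
    · simp only [hφ.eq_one x (ball_subset_closedBall hxr), mul_one]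
    · simp only [max_eq_right (sub_nonpos.2 (hsmall τ hτ x hx hxr).le), zero_mul]
  have hflux : ∀ τ ∈ Ioo 0 t, ∫ x, max (u τ x ^ m - η ^ m) 0 * spaceLap φ x ≤ 0 := fun τ hτ => by
    refine (integral_eq_zero_of_ae (ae_of_all _ fun x => ?_)).le
    by_cases hx : x ∈ ball x₀ R₀ \ ball x₀ r
    · have hτT : τ ∈ Icc 0 T := ⟨hτ.1.le, hτ.2.le.trans ht.2⟩
      have hle : u τ x ^ m ≤ η ^ m := rpow_le_rpow (h.nonneg hτT (ball_subset_closedBall hx.1))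
        (hsmall τ hτT x hx.1 hx.2).le hm.le
      simp [max_eq_right (sub_nonpos.2 hle)]
    · simp [hφ.spaceLap_eq_zero hx]
  have hcontraction := IsFDESol.integral_posPart_sub_mul_le hm ht.1 isOpen_ball
    (h.isFDESol.mono (prod_mono_left (Ioo_subset_Ioo_right ht.2))) (.const hη)
    (h.continuousOn.mono (prod_mono (Icc_subset_Icc_right ht.2) ball_subset_closedBall))
    continuousOn_const hφ.toIsTestFunction hflux
  rwa [mul_zero, add_zero, hremove t ⟨ht.1.le, ht.2⟩, hremove 0 ⟨le_rfl, hT.le⟩] at hcontraction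

theorem setIntegral_le_setIntegral_zero (hm : 0 < m) (h : IsDirichletSol m x₀ R₀ T u u₀)
    (hR₀ : 0 < R₀) (ht : t ∈ Ioc 0 T) :
    ∫ x in ball x₀ R₀, u t x ≤ ∫ x in ball x₀ R₀, u 0 x := by
  have htT : t ∈ Icc 0 T := ⟨ht.1.le, ht.2⟩
  have h0T : (0 : ℝ) ∈ Icc 0 T := ⟨le_rfl, ht.1.le.trans ht.2⟩
  have hconst : ∀ η : ℝ, IntegrableOn (fun _ => η) (ball x₀ R₀) := fun η =>
    integrableOn_const measure_ball_lt_top.ne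
  have hposPart : ∀ τ ∈ Icc 0 T, ∀ η, IntegrableOn (fun x => max (u τ x - η) 0) (ball x₀ R₀) :=
    fun τ hτ η => ((h.integrableOn_slice hτ).sub (hconst η)).pos_part
  have happrox : ∀ η > 0,
      (∫ x in ball x₀ R₀, u t x) - volume.real (ball x₀ R₀) * η ≤ ∫ x in ball x₀ R₀, u 0 x :=
    fun η hη => calc
      (∫ x in ball x₀ R₀, u t x) - volume.real (ball x₀ R₀) * η
          = ∫ x in ball x₀ R₀, (u t x - η) := by
        rw [integral_sub (h.integrableOn_slice htT) (hconst η), setIntegral_const, smul_eq_mul]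
      _ ≤ ∫ x in ball x₀ R₀, max (u t x - η) 0 :=
        integral_mono ((h.integrableOn_slice htT).sub (hconst η)) (hposPart t htT η)
          fun _ => le_max_left _ _
      _ ≤ ∫ x in ball x₀ R₀, max (u 0 x - η) 0 := h.setIntegral_posPart_sub_const_le hm hR₀ hη ht
      _ ≤ ∫ x in ball x₀ R₀, u 0 x :=
        setIntegral_mono_on (hposPart 0 h0T η) (h.integrableOn_slice h0T) measurableSet_ball
          fun x hx => max_le (sub_le_self _ hη.le) (h.nonneg h0T (ball_subset_closedBall hx))
  have hlim : Tendsto (fun η => (∫ x in ball x₀ R₀, u t x) - volume.real (ball x₀ R₀) * η)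
      (𝓝[>] 0) (𝓝 (∫ x in ball x₀ R₀, u t x)) :=
    (Continuous.tendsto' (by fun_prop) 0 _ (by simp)).mono_left nhdsWithin_le_nhds
  exact le_of_tendsto hlim (eventually_nhdsWithin_of_forall happrox)

theorem setIntegral_zero_eq (h : IsDirichletSol m x₀ R₀ T u u₀) (hR : R ≠ 0) (hRR₀ : R < R₀)
    (hsupp : Function.support u₀ ⊆ closedBall x₀ R) :
    ∫ x in ball x₀ R₀, u 0 x = ∫ x in ball x₀ R, u₀ x := calc
  ∫ x in ball x₀ R₀, u 0 x = ∫ x in ball x₀ R₀, u₀ x :=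
    setIntegral_congr_fun measurableSet_ball fun _ => h.apply_zero
  _ = ∫ x in closedBall x₀ R, u₀ x :=
    setIntegral_eq_of_subset_of_forall_sdiff_eq_zero measurableSet_ball
      (closedBall_subset_ball hRR₀) fun _ hx => Function.notMem_support.1 fun h => hx.2 (hsupp h)
  _ = ∫ x in ball x₀ R, u₀ x := by
    refine (setIntegral_congr_set ?_).symm
    rw [← ball_union_sphere]
    exact (union_ae_eq_left_of_ae_eq_empty
      (ae_eq_empty.2 (Measure.addHaar_sphere_of_ne_zero _ _ hR))).symm

end IsDirichletSol

section Annulus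

variable {E : Type*} [NormedAddCommGroup E] [NormedSpace ℝ E] [Nontrivial E] [MeasurableSpace E]
  {μ : Measure E} [μ.IsOpenPosMeasure]

theorem measure_ball_diff_ball_pos (a : E) {r R : ℝ} (hR : 0 < R) (hrR : r < R) :
    0 < μ (ball a R \ ball a r) := by
  obtain ⟨s, hs, hsR⟩ := exists_between (max_lt hrR hR)
  obtain ⟨v, hv⟩ := exists_norm_eq E (le_of_max_le_right hs.le)
  have hne : (ball a R \ closedBall a r).Nonempty := by
    refine ⟨a + v, ?_, ?_⟩
    · rwa [mem_ball_iff_norm, add_sub_cancel_left, hv]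
    · rw [mem_closedBall_iff_norm, add_sub_cancel_left, hv, not_le]
      exact (le_max_left _ _).trans_lt hs
  exact ((isOpen_ball.sdiff isClosed_closedBall).measure_pos μ hne).trans_le
    (measure_mono (sdiff_subset_sdiff_right ball_subset_closedBall))

theorem measureReal_ball_diff_ball_pos [ProperSpace E] [IsFiniteMeasureOnCompacts μ] (a : E)
    {r R : ℝ} (hR : 0 < R) (hrR : r < R) : 0 < μ.real (ball a R \ ball a r) :=
  ENNReal.toReal_pos (measure_ball_diff_ball_pos a hR hrR).ne'
    (measure_ne_top_of_subset sdiff_subset measure_ball_lt_top.ne)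

end Annulus

theorem setIntegral_rpow_le {X : Type*} [MeasurableSpace X] {μ : Measure X} {A : Set X}
    {f : X → ℝ} {m : ℝ} (hm : 0 ≤ m) (hm1 : m ≤ 1) (hA : MeasurableSet A) (hA0 : μ A ≠ 0)
    (hAtop : μ A ≠ ⊤) (hf : ∀ x ∈ A, 0 ≤ f x) (hfi : IntegrableOn f A μ)
    (hfmi : IntegrableOn (fun x => f x ^ m) A μ) :
    ∫ x in A, f x ^ m ∂μ ≤ μ.real A * ((∫ x in A, f x ∂μ) / μ.real A) ^ m := by
  have hpos : 0 < μ.real A := ENNReal.toReal_pos hA0 hAtop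
  have hjensen := (concaveOn_rpow hm hm1).le_map_set_average
    (continuousOn_id.rpow_const fun _ _ => .inr hm) isClosed_Ici hA0 hAtop
    (ae_restrict_of_forall_mem hA hf) hfi hfmi
  rw [setAverage_eq, setAverage_eq, smul_eq_mul, smul_eq_mul, inv_mul_le_iff₀ hpos] at hjensen
  rwa [div_eq_inv_mul]

theorem rpow_one_sub_mul_rpow {α m : ℝ} (hα : 0 ≤ α) (hm : 0 ≤ m) (hm1 : m ≤ 1) :
    α ^ (1 - m) * α ^ m = α := by
  rw [← rpow_add_of_nonneg hα (sub_nonneg.2 hm1) hm, sub_add_cancel, rpow_one]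

theorem rpow_one_sub_le_of_le_mul_rpow {α c m : ℝ} (hα : 0 ≤ α) (hc : 0 ≤ c) (hm : 0 ≤ m)
    (hm1 : m < 1) (h : α ≤ c * α ^ m) : α ^ (1 - m) ≤ c := by
  rcases hα.eq_or_lt with rfl | hα
  · rwa [zero_rpow (sub_pos.2 hm1).ne']
  · refine le_of_mul_le_mul_right ?_ (rpow_pos_of_pos hα m)
    rwa [rpow_one_sub_mul_rpow hα.le hm hm1.le]

namespace IsDirichletSol

variable {m r R R₀ T L s t τ : ℝ} {x₀ : 𝔼 d} {u : ℝ → 𝔼 d → ℝ} {u₀ φ : 𝔼 d → ℝ}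

theorem integrableOn_rpow_annulus (hm : 0 ≤ m) (h : IsDirichletSol m x₀ R₀ T u u₀)
    (ht : t ∈ Icc 0 T) : IntegrableOn (fun x => u t x ^ m) (ball x₀ R₀ \ ball x₀ r) :=
  (((h.continuousOn_slice ht).rpow_const fun _ _ => .inr hm).integrableOn_compact
    (isCompact_closedBall _ _)).mono_set (sdiff_subset.trans ball_subset_closedBall)

theorem neg_integral_rpow_mul_spaceLap_le (h : IsDirichletSol m x₀ R₀ T u u₀)
    (hφ : IsAnnularCutoff x₀ r R₀ L φ) (hm : 0 ≤ m) (ht : t ∈ Ioo 0 T) :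
    -∫ x, u t x ^ m * spaceLap φ x ≤ L * ∫ x in ball x₀ R₀ \ ball x₀ r, u t x ^ m := by
  have htT : t ∈ Icc 0 T := Ioo_subset_Icc_self ht
  have hlap : Integrable fun x => u t x ^ m * spaceLap φ x :=
    integrable_mul_of_tsupport_subset isOpen_ball
      (h.isFDESol.contDiffOn_rpow isOpen_Ioo isOpen_ball ht).continuousOn
      (continuous_spaceLap hφ.contDiff) (hasCompactSupport_spaceLap hφ.hasCompactSupport)
      (tsupport_spaceLap_subset.trans hφ.tsupport_subset)
  rw [← setIntegral_eq_integral_of_forall_compl_eq_zero (s := ball x₀ R₀ \ ball x₀ r)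
    fun x hx => by rw [hφ.spaceLap_eq_zero hx, mul_zero], ← integral_neg, ← integral_const_mul]
  refine setIntegral_mono_on hlap.neg.integrableOn
    ((h.integrableOn_rpow_annulus hm htT).const_mul L)
    (measurableSet_ball.diff measurableSet_ball) fun x hx => ?_
  have hu : 0 ≤ u t x ^ m := rpow_nonneg (h.nonneg htT (ball_subset_closedBall hx.1)) m
  calc -(u t x ^ m * spaceLap φ x) = -spaceLap φ x * u t x ^ m := by ring
    _ ≤ L * u t x ^ m := by
      gcongr
      exact (neg_le_abs _).trans (hφ.abs_spaceLap_le x)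

theorem integral_mul_le_add_of_annulus_le (h : IsDirichletSol m x₀ R₀ T u u₀)
    (hφ : IsAnnularCutoff x₀ r R₀ L φ) (hm : 0 ≤ m) (hs : 0 ≤ s) (hst : s ≤ t) (htT : t ≤ T)
    {G : ℝ} (hG : ∀ τ ∈ Ioo s t, ∫ x in ball x₀ R₀ \ ball x₀ r, u τ x ^ m ≤ G) :
    ∫ x, u s x * φ x ≤ (∫ x, u t x * φ x) + (t - s) * (L * G) := by
  have hL : 0 ≤ L := hφ.bound_nonneg
  refine IsFDESol.integral_mul_le_of_flux_le hst isOpen_ball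
    (h.isFDESol.mono (prod_mono_left (Ioo_subset_Ioo hs htT)))
    (h.continuousOn.mono (prod_mono (Icc_subset_Icc hs htT) ball_subset_closedBall))
    hφ.toIsTestFunction fun τ hτ => neg_le.1 ?_
  exact (h.neg_integral_rpow_mul_spaceLap_le hφ hm (Ioo_subset_Ioo hs htT hτ)).trans
    (mul_le_mul_of_nonneg_left (hG τ hτ) hL)

theorem integral_zero_mul_eq (h : IsDirichletSol m x₀ R₀ T u u₀)
    (hφ : IsAnnularCutoff x₀ r R₀ L φ) (hR : R ≠ 0) (hRr : R ≤ r) (hRR₀ : R < R₀)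
    (hsupp : Function.support u₀ ⊆ closedBall x₀ R) :
    ∫ x, u 0 x * φ x = ∫ x in ball x₀ R, u₀ x := by
  rw [← h.setIntegral_zero_eq hR hRR₀ hsupp,
    ← setIntegral_eq_integral_of_forall_compl_eq_zero (s := ball x₀ R₀)
      fun x hx => by rw [hφ.apply_eq_zero hx, mul_zero]]
  refine setIntegral_congr_fun measurableSet_ball fun x hx => ?_
  simp only [h.apply_zero hx]
  by_cases hx0 : u₀ x = 0
  · rw [hx0, zero_mul]
  · rw [hφ.eq_one x (closedBall_subset_closedBall hRr (hsupp hx0)), mul_one]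

theorem integral_extinction_mul_eq_zero (h : IsDirichletSol m x₀ R₀ T u u₀)
    (hφ : IsTestFunction (ball x₀ R₀) φ) : ∫ x, u T x * φ x = 0 := by
  refine integral_eq_zero_of_ae (ae_of_all _ fun x => ?_)
  by_cases hx : x ∈ ball x₀ R₀
  · simp [h.2.2.2.2.2.1 x (ball_subset_closedBall hx)]
  · simp [hφ.apply_eq_zero hx]

theorem setIntegral_annulus_rpow_le [NeZero d] (h : IsDirichletSol m x₀ R₀ T u u₀) (hm : 0 < m)
    (hm1 : m ≤ 1) (hR : 0 < R) (hRR₀ : R < R₀) (hrR₀ : r < R₀)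
    (hsupp : Function.support u₀ ⊆ closedBall x₀ R) (ht : t ∈ Ioc 0 T) :
    ∫ x in ball x₀ R₀ \ ball x₀ r, u t x ^ m ≤ volume.real (ball x₀ R₀ \ ball x₀ r) *
      ((∫ x in ball x₀ R, u₀ x) / volume.real (ball x₀ R₀ \ ball x₀ r)) ^ m := by
  have htT : t ∈ Icc 0 T := ⟨ht.1.le, ht.2⟩
  have hnonneg : ∀ x ∈ ball x₀ R₀, 0 ≤ u t x := fun x hx =>
    h.nonneg htT (ball_subset_closedBall hx)
  have hA : MeasurableSet (ball x₀ R₀ \ ball x₀ r) := measurableSet_ball.diff measurableSet_ball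
  have hmass : ∫ x in ball x₀ R₀ \ ball x₀ r, u t x ≤ ∫ x in ball x₀ R, u₀ x := calc
    ∫ x in ball x₀ R₀ \ ball x₀ r, u t x ≤ ∫ x in ball x₀ R₀, u t x :=
      setIntegral_mono_set (h.integrableOn_slice htT)
        (ae_restrict_of_forall_mem measurableSet_ball hnonneg) sdiff_subset.eventuallyLE
    _ ≤ ∫ x in ball x₀ R₀, u 0 x := h.setIntegral_le_setIntegral_zero hm (hR.trans hRR₀) ht
    _ = ∫ x in ball x₀ R, u₀ x := h.setIntegral_zero_eq hR.ne' hRR₀ hsupp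
  refine (setIntegral_rpow_le hm.le hm1 hA
    (measure_ball_diff_ball_pos x₀ (hR.trans hRR₀) hrR₀).ne'
    (measure_ne_top_of_subset sdiff_subset measure_ball_lt_top.ne) (fun x hx => hnonneg x hx.1)
    ((h.integrableOn_slice htT).mono_set sdiff_subset)
    (h.integrableOn_rpow_annulus hm.le htT)).trans ?_
  have hmass_nonneg : 0 ≤ ∫ x in ball x₀ R₀ \ ball x₀ r, u t x :=
    setIntegral_nonneg hA fun x hx => hnonneg x hx.1
  gcongr

theorem setIntegral_initial_nonneg (h : IsDirichletSol m x₀ R₀ T u u₀) (hT : 0 ≤ T)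
    (hRR₀ : R ≤ R₀) : 0 ≤ ∫ x in ball x₀ R, u₀ x :=
  setIntegral_nonneg measurableSet_ball fun x hx => by
    have hxR₀ : x ∈ ball x₀ R₀ := ball_subset_ball hRR₀ hx
    rw [← h.apply_zero hxR₀]
    exact h.nonneg ⟨le_rfl, hT⟩ (ball_subset_closedBall hxR₀)

theorem rpow_average_le_extinction [NeZero d] (h : IsDirichletSol m x₀ R₀ T u u₀)
    (hφ : IsAnnularCutoff x₀ r R₀ L φ) (hm : 0 < m) (hm1 : m < 1) (hR : 0 < R) (hRr : R ≤ r)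
    (hrR₀ : r < R₀) (hT : 0 ≤ T) (hsupp : Function.support u₀ ⊆ closedBall x₀ R) :
    ((∫ x in ball x₀ R, u₀ x) / volume.real (ball x₀ R₀ \ ball x₀ r)) ^ (1 - m) ≤ T * L := by
  have hRR₀ : R < R₀ := hRr.trans_lt hrR₀
  have hL : 0 ≤ L := hφ.bound_nonneg
  have hM := h.setIntegral_initial_nonneg hT hRR₀.le
  have hflux := h.integral_mul_le_add_of_annulus_le hφ hm.le le_rfl hT le_rfl fun τ hτ =>
    h.setIntegral_annulus_rpow_le (r := r) hm hm1.le hR hRR₀ hrR₀ hsupp (Ioo_subset_Ioc_self hτ)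
  rw [h.integral_zero_mul_eq hφ hR.ne' hRr hRR₀ hsupp,
    h.integral_extinction_mul_eq_zero hφ.toIsTestFunction, zero_add, sub_zero] at hflux
  have hV : 0 < volume.real (ball x₀ R₀ \ ball x₀ r) :=
    measureReal_ball_diff_ball_pos x₀ (hR.trans hRR₀) hrR₀
  refine rpow_one_sub_le_of_le_mul_rpow (by positivity) (by positivity) hm.le hm1 ?_
  rw [div_le_iff₀ hV]
  linarith

theorem half_mass_le_integral_mul [NeZero d] (h : IsDirichletSol m x₀ R₀ T u u₀)
    (hφ : IsAnnularCutoff x₀ r R₀ L φ) (hm : 0 < m) (hm1 : m ≤ 1) (hR : 0 < R) (hRr : R ≤ r)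
    (hrR₀ : r < R₀) (hsupp : Function.support u₀ ⊆ closedBall x₀ R) (ht : t ∈ Icc 0 T)
    (htL : 2 * (t * L) ≤
      ((∫ x in ball x₀ R, u₀ x) / volume.real (ball x₀ R₀ \ ball x₀ r)) ^ (1 - m)) :
    (∫ x in ball x₀ R, u₀ x) / 2 ≤ ∫ x, u t x * φ x := by
  have hRR₀ : R < R₀ := hRr.trans_lt hrR₀
  have hflux := h.integral_mul_le_add_of_annulus_le hφ hm.le le_rfl ht.1 ht.2 fun τ hτ =>
    h.setIntegral_annulus_rpow_le (r := r) hm hm1 hR hRR₀ hrR₀ hsupp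
      ⟨hτ.1, hτ.2.le.trans ht.2⟩
  rw [h.integral_zero_mul_eq hφ hR.ne' hRr hRR₀ hsupp, sub_zero] at hflux
  have hM := h.setIntegral_initial_nonneg (ht.1.trans ht.2) hRR₀.le
  have hV : 0 < volume.real (ball x₀ R₀ \ ball x₀ r) :=
    measureReal_ball_diff_ball_pos x₀ (hR.trans hRR₀) hrR₀
  set M := ∫ x in ball x₀ R, u₀ x
  set V := volume.real (ball x₀ R₀ \ ball x₀ r)
  have hloss : t * (L * (V * (M / V) ^ m)) ≤ M / 2 := calc
    t * (L * (V * (M / V) ^ m)) = 2 * (t * L) * ((M / V) ^ m * (V / 2)) := by ring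
    _ ≤ (M / V) ^ (1 - m) * ((M / V) ^ m * (V / 2)) := by gcongr
    _ = M / V * (V / 2) := by
      rw [← mul_assoc, rpow_one_sub_mul_rpow (by positivity) hm.le hm1]
    _ = M / 2 := by field_simp
  linarith

theorem rpow_apply_le_center (h : IsDirichletSol m x₀ R₀ T u u₀) (hm : 0 < m) (hm1 : m < 1)
    (hsupp : Function.support u₀ ⊆ closedBall x₀ R) (ht : 0 < t) (htτ : t ≤ τ) (hτT : τ ≤ T)
    {x : 𝔼 d} (hx : x ∈ ball x₀ R₀ \ ball x₀ (2 * R)) :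
    u τ x ^ m ≤ (T / t) ^ (m / (1 - m)) * u t x₀ ^ m := by
  have : 0 < 1 - m := sub_pos.2 hm1
  have hτ : 0 < τ := ht.trans_le htτ
  have htT : t ≤ T := htτ.trans hτT
  have hT : 0 < T := ht.trans_le htT
  have hxR₀ : x ∈ closedBall x₀ R₀ := ball_subset_closedBall hx.1
  have htime : u τ x ≤ (τ / t) ^ (1 / (1 - m)) * u t x := by
    have := h.apply_mul_le hm hm1 ((one_le_div ht).2 htτ) ht
      (by rwa [div_mul_cancel₀ _ ht.ne']) hx.1
    rwa [div_mul_cancel₀ _ ht.ne'] at this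
  have hspace : u t x ≤ u t x₀ := h.apply_le_apply_center hm hsupp hT ⟨ht, htT⟩ hx.1 hx.2
  have hut : 0 ≤ u t x := h.nonneg ⟨ht.le, htT⟩ hxR₀
  calc u τ x ^ m ≤ ((T / t) ^ (1 / (1 - m)) * u t x₀) ^ m := by
        refine rpow_le_rpow (h.nonneg ⟨hτ.le, hτT⟩ hxR₀) (htime.trans ?_) hm.le
        gcongr
    _ = (T / t) ^ (m / (1 - m)) * u t x₀ ^ m := by
        rw [mul_rpow (by positivity) (hut.trans hspace), ← rpow_mul (by positivity),
          one_div_mul_eq_div]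

theorem half_mass_le_mul_center [NeZero d] (h : IsDirichletSol m x₀ R₀ T u u₀)
    (hφ : IsAnnularCutoff x₀ (2 * R) R₀ L φ) (hm : 0 < m) (hm1 : m < 1) (hR : 0 < R)
    (hRR₀ : 2 * R < R₀) (hsupp : Function.support u₀ ⊆ closedBall x₀ R) (ht : 0 < t) (htT : t ≤ T)
    (htL : 2 * (t * L) ≤
      ((∫ x in ball x₀ R, u₀ x) / volume.real (ball x₀ R₀ \ ball x₀ (2 * R))) ^ (1 - m)) :
    (∫ x in ball x₀ R, u₀ x) / 2 ≤ T * (L *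
      (volume.real (ball x₀ R₀ \ ball x₀ (2 * R)) * ((T / t) ^ (m / (1 - m)) * u t x₀ ^ m))) := by
  have hL : 0 ≤ L := hφ.bound_nonneg
  have hT : 0 < T := ht.trans_le htT
  have hcenter : 0 ≤ u t x₀ :=
    h.nonneg ⟨ht.le, htT⟩ (mem_closedBall_self (by linarith))
  have hannulus : ∀ τ ∈ Ioo t T, ∫ x in ball x₀ R₀ \ ball x₀ (2 * R), u τ x ^ m ≤
      volume.real (ball x₀ R₀ \ ball x₀ (2 * R)) * ((T / t) ^ (m / (1 - m)) * u t x₀ ^ m) :=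
    fun τ hτ => by
      refine (setIntegral_mono_on
        (h.integrableOn_rpow_annulus hm.le ⟨(ht.trans hτ.1).le, hτ.2.le⟩)
        (integrableOn_const (measure_ne_top_of_subset sdiff_subset measure_ball_lt_top.ne))
        (measurableSet_ball.diff measurableSet_ball)
        fun x hx => h.rpow_apply_le_center hm hm1 hsupp ht hτ.1.le hτ.2.le hx).trans_eq ?_
      rw [setIntegral_const, smul_eq_mul]
  refine (h.half_mass_le_integral_mul hφ hm hm1.le hR (by linarith) hRR₀ hsupp ⟨ht.le, htT⟩
    htL).trans ?_
  refine (h.integral_mul_le_add_of_annulus_le hφ hm.le ht.le htT le_rfl hannulus).trans ?_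
  rw [h.integral_extinction_mul_eq_zero hφ.toIsTestFunction, zero_add]
  gcongr
  linarith

end IsDirichletSol

theorem mul_rpow_mul_le_of_half_le {m L M T U V t : ℝ} (hm1 : m < 1) (hL : 0 < L) (hV : 0 < V)
    (hT : 0 < T) (ht : 0 < t) (h : M / 2 ≤ T * (L * (V * ((T / t) ^ (m / (1 - m)) * U)))) :
    (2 * L)⁻¹ * V⁻¹ * T ^ (-(1 / (1 - m))) * t ^ (m / (1 - m)) * M ≤ U := by
  have hexp : -(1 / (1 - m)) = -(1 + m / (1 - m)) := by
    have := (sub_pos.2 hm1).ne'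
    field_simp
    ring
  rw [div_rpow hT.le ht.le] at h
  rw [hexp, rpow_neg hT.le, rpow_add hT, rpow_one]
  have hTq : 0 < T ^ (m / (1 - m)) := rpow_pos_of_pos hT _
  have htq : 0 < t ^ (m / (1 - m)) := rpow_pos_of_pos ht _
  set P := T ^ (m / (1 - m))
  set p := t ^ (m / (1 - m))
  calc (2 * L)⁻¹ * V⁻¹ * (T * P)⁻¹ * p * M = L⁻¹ * V⁻¹ * (T * P)⁻¹ * p * (M / 2) := by
        field_simp
    _ ≤ L⁻¹ * V⁻¹ * (T * P)⁻¹ * p * (T * (L * (V * (P / p * U)))) := by gcongr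
    _ = U := by field_simp

end Development

/-- **Theorem 2.2: positivity for the minimal Dirichlet problem.** -/
theorem minimal_dirichlet_positivity
    (d : ℕ) (hd : 1 ≤ d) :
    ∃ a b : ℝ, 0 < a ∧ 0 < b ∧
      ∀ (m : ℝ), 0 < m → m < 1 →
      ∀ (x₀ : EuclideanSpace ℝ (Fin d)) (R R₀ T : ℝ), 0 < R → 2 * R < R₀ → 0 < T →
      ∀ (u : ℝ → EuclideanSpace ℝ (Fin d) → ℝ) (u₀ : EuclideanSpace ℝ (Fin d) → ℝ),
        (∀ x, 0 ≤ u₀ x) →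
        (Function.support u₀ ⊆ closedBall x₀ R) →
        (∃ x, u₀ x ≠ 0) →
        IsDirichletSol m x₀ R₀ T u u₀ →
        T ≥ 2 * (a * (R₀ - 2 * R) ^ 2 *
          ((∫ x in ball x₀ R, u₀ x) /
            (volume (ball x₀ R₀ \ ball x₀ (2 * R))).toReal) ^ (1 - m)) ∧
        ∀ t : ℝ, 0 < t →
          t ≤ a * (R₀ - 2 * R) ^ 2 *
            ((∫ x in ball x₀ R, u₀ x) /
              (volume (ball x₀ R₀ \ ball x₀ (2 * R))).toReal) ^ (1 - m) →
          u t x₀ ^ m ≥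
            b * (R₀ - 2 * R) ^ 2 * (volume (ball x₀ R₀ \ ball x₀ (2 * R))).toReal⁻¹ *
              T ^ (-(1 / (1 - m))) * t ^ (m / (1 - m)) * ∫ x in ball x₀ R, u₀ x := by
  have : NeZero d := ⟨Nat.one_le_iff_ne_zero.1 hd⟩
  obtain ⟨C, hC, hcutoff⟩ := exists_isAnnularCutoff d
  refine ⟨(2 * C)⁻¹, (2 * C)⁻¹, by positivity, by positivity, ?_⟩
  intro m hm hm1 x₀ R R₀ T hR hRR₀ hT u u₀ _ hsupp _ h
  obtain ⟨φ, hφ⟩ := hcutoff x₀ (2 * R) R₀ (by linarith) hRR₀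
  have hgap : 0 < R₀ - 2 * R := sub_pos.2 hRR₀
  have hL : 0 < C / (R₀ - 2 * R) ^ 2 := by positivity
  have hscale : (2 * C)⁻¹ * (R₀ - 2 * R) ^ 2 = (2 * (C / (R₀ - 2 * R) ^ 2))⁻¹ := by field_simp
  have hV : 0 < volume.real (ball x₀ R₀ \ ball x₀ (2 * R)) :=
    measureReal_ball_diff_ball_pos x₀ (by linarith) hRR₀
  have hextinction := h.rpow_average_le_extinction hφ hm hm1 hR (by linarith) hRR₀ hT.le hsupp
  have hcritical := inv_mul_le_of_le_mul₀ (by positivity) (by positivity)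
    (hextinction.trans_eq (by ring : _ = 2 * (C / (R₀ - 2 * R) ^ 2) * (T / 2)))
  simp only [hscale, ← measureReal_def]
  refine ⟨by linarith, fun t ht htcritical => ?_⟩
  refine mul_rpow_mul_le_of_half_le hm1 hL hV hT ht ?_
  refine h.half_mass_le_mul_center hφ hm hm1 hR hRR₀ hsupp ht (by linarith) ?_
  rw [le_inv_mul_iff₀ (by positivity)] at htcritical
  linarith
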